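/- arXiv:1810.12493 — 2 statements merged into one kernel-verified Lean document; each statement's English description precedes it below -/
import Mathlib

section
/- For every real number x, the limit Ψ_d(x) = lim_{N→∞} (1/V_d(N)) · #{λ a strongly concave composition of N : rk(λ) ≤ x·(6N/π²)^{1/4}} exists and equals the standard normal distribution function, i.e., Ψ_d(x) = (1/√(2π)) ∫_{−∞}^{x} e^{−t²/2} dt. -/
open scoped BigOperators

/-- `IsSCC n l k` says that the list `l = (a_1, ..., a_s)` of nonnegative integers
is a strongly concave composition of `n` with central part at (1-indexed) position `k`:
`a_1 > a_2 > ... > a_{k-1} > a_k < a_{k+1} < ... < a_s` and `a_1 + ... + a_s = n`. -/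
def IsSCC (n : ℕ) (l : List ℕ) (k : ℕ) : Prop :=
  1 ≤ k ∧ k ≤ l.length ∧ l.sum = n ∧
  (∀ i j : Fin l.length, (i : ℕ) < j → (j : ℕ) < k → l.get j < l.get i) ∧
  (∀ i j : Fin l.length, k - 1 ≤ (i : ℕ) → (i : ℕ) < j → l.get i < l.get j)

/-- The rank `s - 2k + 1` of a strongly concave composition with `s` parts and
central part at position `k`. -/
def sccRank (l : List ℕ) (k : ℕ) : ℤ := (l.length : ℤ) - 2 * k + 1

/-- `Vd m n` is the number of strongly concave compositions of `n` with rank `m`. -/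
noncomputable def Vd (m : ℤ) (n : ℕ) : ℕ :=
  Set.ncard {p : List ℕ × ℕ | IsSCC n p.1 p.2 ∧ sccRank p.1 p.2 = m}

/-- `VdTotal n` is the total number of strongly concave compositions of `n`. -/
noncomputable def VdTotal (n : ℕ) : ℕ :=
  Set.ncard {p : List ℕ × ℕ | IsSCC n p.1 p.2}

/-- The partition function, extended by `0` to negative integers. -/
def partitionCount (k : ℤ) : ℕ :=
  if 0 ≤ k then Fintype.card (Nat.Partition k.toNat) else 0

open Real Filter

/-!
A strongly concave composition of `N` is a central part `c` together with two finite sets `A`, `B`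
of integers greater than `c`, of total size `N - c`, and its rank is `#B - #A`. Put each `j` into
`A` and into `B` independently with odds `rexp (-(t * j))`. All pairs of a given total size are then
equally likely, so the trigonometric sum of the ranks over the pairs of total size `N - c` is a
Fourier coefficient of the joint characteristic function of rank and total size. For
`t = π / √(6 * N)` the mean total size is close to `N`, because `ζ(2) = π² / 6`, and the variance of
the rank is close to `1 / t`. Rescaled by the standard deviations the characteristic function
converges to `rexp (-(θ ^ 2 + v ^ 2) / 2)` and is dominated by a multiple of `1 / (1 + v ^ 2)`, so
that up to a factor depending only on `N` the Fourier coefficient tends to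
`(1 / 4) ^ c * rexp (-θ ^ 2 / 2)`. Summation over `c` shows that the characteristic function of the
rank divided by `t ^ (-1 / 2) = (6 * N / π ^ 2) ^ (1 / 4)` tends to `rexp (-θ ^ 2 / 2)`, and Lévy's
continuity theorem applies.
-/

/-! ### Bernoulli characteristic functions -/

/-- The characteristic function at `ω` of a Bernoulli variable with success probability `p`. -/
noncomputable def bernoulliCharFun (p ω : ℝ) : ℂ := 1 - p + p * Complex.exp (ω * Complex.I)

lemma norm_bernoulliCharFun_sq (p ω : ℝ) :
    ‖bernoulliCharFun p ω‖ ^ 2 = 1 - 2 * (p * (1 - p) * (1 - cos ω)) := by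
  rw [bernoulliCharFun, ← Complex.normSq_eq_norm_sq, Complex.normSq_apply, Complex.exp_mul_I]
  simp only [Complex.add_re, Complex.sub_re, Complex.one_re, Complex.ofReal_re, Complex.mul_re,
    Complex.ofReal_im, Complex.add_im, Complex.sub_im, Complex.one_im, Complex.mul_im,
    Complex.I_re, Complex.I_im, ← Complex.ofReal_cos, ← Complex.ofReal_sin]
  linear_combination p ^ 2 * sin_sq_add_cos_sq ω

lemma norm_bernoulliCharFun_le_exp (p ω : ℝ) :
    ‖bernoulliCharFun p ω‖ ≤ rexp (-(p * (1 - p) * (1 - cos ω))) := by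
  refine le_of_sq_le_sq ?_ (exp_pos _).le
  rw [norm_bernoulliCharFun_sq, ← Real.exp_nat_mul, Nat.cast_ofNat, mul_neg]
  exact one_sub_le_exp_neg _

lemma norm_bernoulliCharFun_le_one {p : ℝ} (hp : p ∈ Set.Icc 0 1) (ω : ℝ) :
    ‖bernoulliCharFun p ω‖ ≤ 1 := by
  refine (norm_bernoulliCharFun_le_exp p ω).trans (exp_le_one_iff.2 (neg_nonpos.2 ?_))
  exact mul_nonneg (mul_nonneg hp.1 (sub_nonneg.2 hp.2)) (sub_nonneg.2 (cos_le_one ω))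

lemma norm_exp_mul_I_sub_taylor_le (x : ℝ) :
    ‖Complex.exp (x * Complex.I) - (1 + x * Complex.I - x ^ 2 / 2)‖ ≤ 4 * |x| ^ 3 := by
  rcases le_or_gt |x| 1 with h | h
  · have htaylor := Complex.exp_bound (x := x * Complex.I) (by simpa using h) (n := 3) (by simp)
    have hsum : ∑ m ∈ Finset.range 3, (x * Complex.I) ^ m / (m.factorial : ℂ)
        = 1 + x * Complex.I - x ^ 2 / 2 := by
      simp only [Finset.sum_range_succ, Finset.range_zero, Finset.sum_empty, mul_pow,
        Complex.I_sq, Nat.factorial]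
      push_cast
      ring
    rw [hsum] at htaylor
    refine htaylor.trans ?_
    norm_num [Nat.factorial]
    nlinarith [pow_nonneg (abs_nonneg x) 3]
  · have hpoly : ‖(1 + x * Complex.I - x ^ 2 / 2 : ℂ)‖ ≤ 1 + |x| + |x| ^ 2 / 2 := by
      refine (norm_sub_le _ _).trans (add_le_add ((norm_add_le _ _).trans ?_) ?_) <;> simp
    calc _ ≤ 1 + (1 + |x| + |x| ^ 2 / 2) := by
          refine (norm_sub_le _ _).trans (add_le_add ?_ hpoly)
          rw [Complex.norm_exp_ofReal_mul_I]
      _ ≤ 4 * |x| ^ 3 := by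
          have h1 : |x| ≤ |x| ^ 3 := le_self_pow₀ h.le (by simp)
          have h2 : |x| ^ 2 ≤ |x| ^ 3 := pow_le_pow_right₀ h.le (by simp)
          linarith

lemma abs_exp_neg_sq_sub_le (y : ℝ) : |rexp (-y ^ 2) - (1 - y ^ 2)| ≤ |y| ^ 3 := by
  rw [← sq_abs y]
  generalize hz : |y| = z
  have hz0 : 0 ≤ z := hz ▸ abs_nonneg y
  rcases le_or_gt z 1 with h | h
  · have htaylor := abs_exp_sub_one_sub_id_le (x := -z ^ 2) (by
      rw [abs_neg, abs_of_nonneg (by positivity)]; exact pow_le_one₀ hz0 h)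
    calc |rexp (-z ^ 2) - (1 - z ^ 2)| ≤ (-z ^ 2) ^ 2 := by convert htaylor using 2; ring
      _ = z ^ 4 := by ring
      _ ≤ z ^ 3 := pow_le_pow_of_le_one hz0 h (by simp)
  · rw [abs_of_nonneg (by linarith [one_sub_le_exp_neg (z ^ 2)])]
    have hexp : rexp (-z ^ 2) ≤ 1 := exp_le_one_iff.2 (by simpa using sq_nonneg z)
    have hpow : z ^ 2 ≤ z ^ 3 := pow_le_pow_right₀ h.le (by simp)
    linarith

lemma norm_centered_bernoulliCharFun_sub_taylor_le {p : ℝ} (hp : p ∈ Set.Icc 0 1) (ω : ℝ) :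
    ‖bernoulliCharFun p ω * Complex.exp (-(p * ω) * Complex.I)
      - (1 - p * (1 - p) * ω ^ 2 / 2 : ℝ)‖ ≤ 4 * (p * |ω| ^ 3) := by
  obtain ⟨hp0, hp1⟩ := hp
  have hfail := norm_exp_mul_I_sub_taylor_le (-(p * ω))
  have hsucc := norm_exp_mul_I_sub_taylor_le ((1 - p) * ω)
  have hsplit : bernoulliCharFun p ω * Complex.exp (-(p * ω) * Complex.I)
      = (1 - p) * Complex.exp ((-(p * ω) : ℝ) * Complex.I)
        + p * Complex.exp (((1 - p) * ω : ℝ) * Complex.I) := by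
    rw [bernoulliCharFun, add_mul, mul_assoc (p : ℂ), ← Complex.exp_add]
    push_cast
    ring_nf
  set E₀ := Complex.exp ((-(p * ω) : ℝ) * Complex.I)
    - (1 + (-(p * ω) : ℝ) * Complex.I - ((-(p * ω) : ℝ) : ℂ) ^ 2 / 2) with hE₀
  set E₁ := Complex.exp (((1 - p) * ω : ℝ) * Complex.I)
    - (1 + ((1 - p) * ω : ℝ) * Complex.I - (((1 - p) * ω : ℝ) : ℂ) ^ 2 / 2) with hE₁
  calc _ = ‖((1 - p : ℝ) : ℂ) * E₀ + (p : ℝ) * E₁‖ := by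
        rw [hsplit, hE₀, hE₁]
        push_cast
        ring_nf
    _ ≤ (1 - p) * ‖E₀‖ + p * ‖E₁‖ := by
        refine (norm_add_le _ _).trans_eq ?_
        rw [norm_mul, norm_mul, Complex.norm_of_nonneg (sub_nonneg.2 hp1),
          Complex.norm_of_nonneg hp0]
    _ ≤ (1 - p) * (4 * |-(p * ω)| ^ 3) + p * (4 * |(1 - p) * ω| ^ 3) := by
        gcongr
    _ = 4 * ((p * (1 - p) * (p ^ 2 + (1 - p) ^ 2)) * |ω| ^ 3) := by
        rw [abs_neg, abs_mul, abs_mul, abs_of_nonneg hp0, abs_of_nonneg (sub_nonneg.2 hp1)]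
        ring
    _ ≤ 4 * (p * |ω| ^ 3) := by
        gcongr
        nlinarith [mul_nonneg hp0 (sub_nonneg.2 hp1), mul_nonneg hp0 hp0]

lemma norm_centered_bernoulliCharFun_sub_le {p : ℝ} (hp : p ∈ Set.Icc 0 1) (ω : ℝ) :
    ‖bernoulliCharFun p ω * Complex.exp (-(p * ω) * Complex.I)
      - rexp (-(p * (1 - p) * ω ^ 2 / 2))‖ ≤ 5 * (p * |ω| ^ 3) := by
  have hq : 0 ≤ 1 - p := sub_nonneg.2 hp.2
  have hv : 0 ≤ p * (1 - p) / 2 := by have := hp.1; positivity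
  have hsq : p * (1 - p) * ω ^ 2 / 2 = (√(p * (1 - p) / 2) * ω) ^ 2 := by
    rw [mul_pow, sq_sqrt hv]
    ring
  have hcube : |√(p * (1 - p) / 2) * ω| ^ 3 ≤ p * |ω| ^ 3 := by
    rw [abs_mul, mul_pow, abs_of_nonneg (sqrt_nonneg _), pow_succ, sq_sqrt hv]
    gcongr
    have : √(p * (1 - p) / 2) ≤ 1 := sqrt_le_one.2 (by nlinarith [hp.1])
    nlinarith [hp.1, mul_nonneg hp.1 hq, sqrt_nonneg (p * (1 - p) / 2)]
  have hgauss : ‖((1 - p * (1 - p) * ω ^ 2 / 2 : ℝ) : ℂ) - rexp (-(p * (1 - p) * ω ^ 2 / 2))‖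
      ≤ p * |ω| ^ 3 := by
    rw [← Complex.ofReal_sub, Complex.norm_real, norm_eq_abs, abs_sub_comm, hsq]
    exact (abs_exp_neg_sq_sub_le _).trans hcube
  linarith [norm_sub_le_norm_sub_add_norm_sub
    (bernoulliCharFun p ω * Complex.exp (-(p * ω) * Complex.I))
    ((1 - p * (1 - p) * ω ^ 2 / 2 : ℝ) : ℂ) (rexp (-(p * (1 - p) * ω ^ 2 / 2)) : ℂ),
    norm_centered_bernoulliCharFun_sub_taylor_le hp ω]

lemma norm_prod_sub_prod_le_sum {ι : Type*} (s : Finset ι) (a b : ι → ℂ)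
    (ha : ∀ i ∈ s, ‖a i‖ ≤ 1) (hb : ∀ i ∈ s, ‖b i‖ ≤ 1) :
    ‖∏ i ∈ s, a i - ∏ i ∈ s, b i‖ ≤ ∑ i ∈ s, ‖a i - b i‖ := by
  classical
  induction s using Finset.induction_on with
  | empty => simp
  | insert i s hi ih =>
    rw [Finset.forall_mem_insert] at ha hb
    rw [Finset.prod_insert hi, Finset.prod_insert hi, Finset.sum_insert hi]
    have htelescope : a i * ∏ i ∈ s, a i - b i * ∏ i ∈ s, b i
        = (a i - b i) * ∏ i ∈ s, a i + b i * (∏ i ∈ s, a i - ∏ i ∈ s, b i) := by ring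
    rw [htelescope]
    refine (norm_add_le _ _).trans (add_le_add ?_ ?_) <;> rw [norm_mul]
    · refine mul_le_of_le_one_right (norm_nonneg _) ?_
      rw [norm_prod]
      exact Finset.prod_le_one (fun _ _ => norm_nonneg _) ha.2
    · exact (mul_le_of_le_one_left (norm_nonneg _) hb.1).trans (ih ha.2 hb.2)

lemma norm_centered_prod_bernoulliCharFun_sub_le {ι : Type*} (s : Finset ι) {p : ι → ℝ}
    (hp : ∀ i ∈ s, p i ∈ Set.Icc 0 1) (ω : ι → ℝ) :
    ‖(∏ i ∈ s, bernoulliCharFun (p i) (ω i)) * Complex.exp (-(∑ i ∈ s, p i * ω i : ℝ) * Complex.I)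
      - rexp (-((∑ i ∈ s, p i * (1 - p i) * ω i ^ 2) / 2))‖ ≤ 5 * ∑ i ∈ s, p i * |ω i| ^ 3 := by
  have hlhs : (∏ i ∈ s, bernoulliCharFun (p i) (ω i))
      * Complex.exp (-(∑ i ∈ s, p i * ω i : ℝ) * Complex.I)
      = ∏ i ∈ s, bernoulliCharFun (p i) (ω i) * Complex.exp (-(p i * ω i) * Complex.I) := by
    rw [Finset.prod_mul_distrib, ← Complex.exp_sum, ← Finset.sum_mul, Finset.sum_neg_distrib]
    push_cast
    rfl
  have hrhs : (rexp (-((∑ i ∈ s, p i * (1 - p i) * ω i ^ 2) / 2)) : ℂ)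
      = ∏ i ∈ s, (rexp (-(p i * (1 - p i) * ω i ^ 2 / 2)) : ℂ) := by
    rw [Finset.sum_div, ← Finset.sum_neg_distrib, Real.exp_sum, Complex.ofReal_prod]
  rw [hlhs, hrhs, Finset.mul_sum]
  refine (norm_prod_sub_prod_le_sum s _ _ (fun i hi => ?_) fun i hi => ?_).trans
    (Finset.sum_le_sum fun i hi => norm_centered_bernoulliCharFun_sub_le (hp i hi) (ω i))
  · rw [norm_mul]
    refine mul_le_one₀ (norm_bernoulliCharFun_le_one (hp i hi) _) (norm_nonneg _) ?_
    exact_mod_cast (Complex.norm_exp_ofReal_mul_I (-(p i * ω i))).le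
  · rw [Complex.norm_of_nonneg (exp_pos _).le, exp_le_one_iff, neg_nonpos]
    have h1 := (hp i hi).1
    have h2 := sub_nonneg.2 (hp i hi).2
    positivity

/-! ### Logistic weights -/

/-- The density `e⁻ˣ / (1 + e⁻ˣ)²` of the standard logistic distribution; it is the variance of a
Bernoulli variable with success probability `sigmoid (-x)`. -/
noncomputable def logisticPDF (x : ℝ) : ℝ := sigmoid x * sigmoid (-x)

lemma sigmoid_neg_mem_Icc (x : ℝ) : sigmoid (-x) ∈ Set.Icc 0 1 :=
  ⟨sigmoid_nonneg _, sigmoid_le_one _⟩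

lemma sigmoid_neg_le_exp_neg (x : ℝ) : sigmoid (-x) ≤ rexp (-x) := by
  rw [← sigmoid_mul_rexp_neg]
  exact mul_le_of_le_one_left (exp_pos _).le (sigmoid_le_one x)

lemma logisticPDF_eq_mul_one_sub (x : ℝ) :
    logisticPDF x = sigmoid (-x) * (1 - sigmoid (-x)) := by
  rw [logisticPDF, sigmoid_neg]
  ring

lemma logisticPDF_pos (x : ℝ) : 0 < logisticPDF x := mul_pos (sigmoid_pos x) (sigmoid_pos _)

lemma logisticPDF_le_exp_neg (x : ℝ) : logisticPDF x ≤ rexp (-x) :=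
  (mul_le_of_le_one_left (sigmoid_nonneg _) (sigmoid_le_one x)).trans (sigmoid_neg_le_exp_neg x)

lemma exp_neg_div_four_le_logisticPDF {x : ℝ} (hx : 0 ≤ x) : rexp (-x) / 4 ≤ logisticPDF x := by
  have hhalf : 1 / 2 ≤ sigmoid x := by simpa [sigmoid_zero] using sigmoid_le hx
  have hpdf : logisticPDF x = sigmoid x * sigmoid x * rexp (-x) := by
    rw [logisticPDF, ← sigmoid_mul_rexp_neg, mul_assoc]
  nlinarith [exp_pos (-x), mul_le_mul hhalf hhalf (by norm_num) (sigmoid_nonneg x)]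

lemma one_div_twelve_le_logisticPDF {x : ℝ} (hx0 : 0 ≤ x) (hx1 : x ≤ 1) :
    1 / 12 ≤ logisticPDF x := by
  have hexp : rexp 1 * rexp (-x) ≥ 1 := by
    rw [← Real.exp_add]
    exact one_le_exp (by linarith)
  nlinarith [exp_neg_div_four_le_logisticPDF hx0, exp_one_lt_d9, exp_pos (-x)]

lemma antitoneOn_logisticPDF : AntitoneOn logisticPDF (Set.Ici 0) := by
  intro x hx y _ hxy
  have hhalf : 1 / 2 ≤ sigmoid x := by simpa [sigmoid_zero] using sigmoid_le (Set.mem_Ici.1 hx)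
  rw [logisticPDF, logisticPDF, sigmoid_neg, sigmoid_neg]
  nlinarith [sigmoid_le hxy]

lemma continuous_logisticPDF : Continuous logisticPDF :=
  continuous_sigmoid.mul (continuous_sigmoid.comp continuous_neg)

lemma integral_mul_logisticPDF (t a b : ℝ) :
    ∫ x in a..b, t * logisticPDF (t * x) = sigmoid (t * b) - sigmoid (t * a) := by
  refine intervalIntegral.integral_eq_sub_of_hasDerivAt (f := fun x => sigmoid (t * x))
    (fun x _ => ?_) ?_
  · refine ((hasDerivAt_sigmoid (t * x)).comp x ((hasDerivAt_id x).const_mul t)).congr_deriv ?_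
    rw [logisticPDF, sigmoid_neg]
    ring
  · exact (continuous_const.mul (continuous_logisticPDF.comp
      (continuous_const.mul continuous_id))).intervalIntegrable _ _

lemma antitoneOn_mul_logisticPDF {t : ℝ} (ht : 0 ≤ t) :
    AntitoneOn (fun x => t * logisticPDF (t * x)) (Set.Ici 0) := fun _ hx _ hy hxy =>
  mul_le_mul_of_nonneg_left (antitoneOn_logisticPDF (mul_nonneg ht hx) (mul_nonneg ht hy)
    (mul_le_mul_of_nonneg_left hxy ht)) ht

lemma sum_mul_logisticPDF_le {t : ℝ} (ht : 0 ≤ t) (n : ℕ) :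
    ∑ j ∈ Finset.Ioc 0 n, t * logisticPDF (t * j) ≤ sigmoid (t * n) - 1 / 2 := by
  have h := AntitoneOn.sum_le_integral_Ico (Nat.zero_le n)
    ((antitoneOn_mul_logisticPDF ht).mono fun x hx => by simpa using hx.1)
  rw [integral_mul_logisticPDF, Finset.sum_Ico_add' (fun j : ℕ => t * logisticPDF (t * j)),
    Finset.Ico_add_one_add_one_eq_Ioc] at h
  simpa [sigmoid_zero] using h

lemma le_sum_mul_logisticPDF {t : ℝ} (ht : 0 ≤ t) (n : ℕ) :
    sigmoid (t * n) - sigmoid t ≤ ∑ j ∈ Finset.Ioc 0 n, t * logisticPDF (t * j) := by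
  have h := AntitoneOn.integral_le_sum_Ico (Nat.le_add_left 1 n)
    ((antitoneOn_mul_logisticPDF ht).mono fun x hx => le_trans (by simp) hx.1)
  rw [integral_mul_logisticPDF] at h
  rw [← Finset.Ico_add_one_add_one_eq_Ioc]
  refine le_trans (sub_le_sub_right (sigmoid_le ?_) _) (by simpa using h)
  gcongr
  simp

lemma sum_pow_mul_exp_neg_le (k : ℕ) {t : ℝ} (ht : 0 < t) (s : Finset ℕ) :
    ∑ j ∈ s, (j : ℝ) ^ k * rexp (-(t * j)) ≤ rexp t * k.factorial / t ^ (k + 1) :=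
  (Finset.sum_le_sum_of_subset_of_nonneg
    (fun _ hj => Finset.mem_Iic.2 (Finset.le_sup (f := id) hj))
    fun _ _ _ => by positivity).trans (sum_Iic_pow_mul_exp_neg_le (M := s.sup id) ht)

lemma sum_pow_mul_exp_neg_le_of_le_one (k : ℕ) {t : ℝ} (ht : 0 < t) (ht1 : t ≤ 1)
    (s : Finset ℕ) :
    ∑ j ∈ s, (j : ℝ) ^ k * rexp (-(t * j)) ≤ 3 * k.factorial / t ^ (k + 1) := by
  have hexp : rexp t ≤ 3 := (exp_le_exp.2 ht1).trans (by linarith [exp_one_lt_d9])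
  exact (sum_pow_mul_exp_neg_le k ht s).trans (by gcongr)

/-! ### The mean size -/

lemma sinh_le_mul_cosh {y : ℝ} (hy : 0 ≤ y) : sinh y ≤ y * cosh y := by
  have hmono : MonotoneOn (fun y => y * cosh y - sinh y) (Set.Ici 0) := by
    refine monotoneOn_of_deriv_nonneg (convex_Ici 0) (by fun_prop) (by fun_prop) fun x hx => ?_
    rw [interior_Ici, Set.mem_Ioi] at hx
    have hderiv : HasDerivAt (fun y => y * cosh y - sinh y) (1 * cosh x + x * sinh x - cosh x) x :=
      ((hasDerivAt_id x).mul (hasDerivAt_cosh x)).sub (hasDerivAt_sinh x)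
    rw [hderiv.deriv]
    have := mul_pos hx (sinh_pos_iff.2 hx)
    linarith
  have := hmono Set.self_mem_Ici hy hy
  simp only [zero_mul, sinh_zero, sub_zero] at this
  linarith

lemma inv_two_mul_sinh_half_sq_le {x : ℝ} (hx : 0 < x) :
    ((2 * sinh (x / 2)) ^ 2)⁻¹ ≤ (x ^ 2)⁻¹ := by
  have : x / 2 ≤ sinh (x / 2) := self_le_sinh_iff.2 (by linarith)
  gcongr
  linarith

lemma inv_sq_sub_inv_two_mul_sinh_half_sq_le {x : ℝ} (hx : 0 < x) :
    (x ^ 2)⁻¹ - ((2 * sinh (x / 2)) ^ 2)⁻¹ ≤ 1 / 4 := by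
  obtain ⟨y, rfl⟩ : ∃ y, x = 2 * y := ⟨x / 2, by ring⟩
  rw [mul_div_cancel_left₀ _ two_ne_zero]
  have hy : 0 < y := by linarith
  have hsinh : 0 < sinh y := sinh_pos_iff.2 hy
  have hsq : sinh y ^ 2 ≤ y ^ 2 * (1 + sinh y ^ 2) := by
    rw [add_comm, ← cosh_sq, ← mul_pow]
    exact pow_le_pow_left₀ hsinh.le (sinh_le_mul_cosh hy.le) 2
  rw [sub_le_iff_le_add, inv_eq_one_div, inv_eq_one_div,
    div_add_div _ _ (by norm_num) (by positivity), div_le_div_iff₀ (by positivity) (by positivity)]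
  linarith

-- Any exponent strictly between `1` and `3/2` would do in place of `5/4`: the series over multiples
-- of `t` converges, and the sum is negligible compared with the standard deviation `t ^ (-3/2)`.
lemma abs_inv_sq_sub_inv_two_mul_sinh_half_sq_le {x : ℝ} (hx : 0 ≤ x) :
    |(x ^ 2)⁻¹ - ((2 * sinh (x / 2)) ^ 2)⁻¹| ≤ x ^ (-(5 / 4) : ℝ) := by
  rcases hx.eq_or_lt with rfl | hx
  · simp
  have hupper := inv_sq_sub_inv_two_mul_sinh_half_sq_le hx
  have hpos : 0 ≤ ((2 * sinh (x / 2)) ^ 2)⁻¹ := by positivity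
  rw [abs_of_nonneg (sub_nonneg.2 (inv_two_mul_sinh_half_sq_le hx))]
  rcases le_total 1 x with h | h
  · refine (sub_le_self _ hpos).trans ?_
    rw [← rpow_natCast, ← rpow_neg hx.le]
    exact rpow_le_rpow_of_exponent_le h (by norm_num)
  · exact (hupper.trans (by norm_num)).trans
      (one_le_rpow_of_pos_of_le_one_of_nonpos hx h (by norm_num))

lemma exp_neg_div_one_sub_exp_neg_sq (x : ℝ) :
    rexp (-x) / (1 - rexp (-x)) ^ 2 = ((2 * sinh (x / 2)) ^ 2)⁻¹ := by
  have hsq : 1 - rexp (-x) = rexp (-(x / 2)) * (2 * sinh (x / 2)) := by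
    rw [sinh_eq, mul_div_cancel₀ _ two_ne_zero, mul_sub, ← Real.exp_add, ← Real.exp_add,
      neg_add_cancel, Real.exp_zero, ← neg_add, add_halves]
  rw [hsq, mul_pow, ← Real.exp_nat_mul, div_mul_eq_div_div, Nat.cast_ofNat, mul_neg,
    mul_div_cancel₀ _ two_ne_zero, div_self (exp_ne_zero _), one_div]

lemma norm_exp_neg_lt_one {t : ℝ} (ht : 0 < t) : ‖rexp (-t)‖ < 1 := by
  rw [norm_of_nonneg (exp_pos _).le, exp_lt_one_iff]
  linarith

lemma mul_exp_neg_pow_div_one_sub (t : ℝ) (n : ℕ) :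
    (n : ℝ) ^ 1 * rexp (-t) ^ n / (1 - rexp (-t) ^ n) = n / (rexp (t * n) - 1) := by
  have h : rexp (-t) ^ n = (rexp (t * n))⁻¹ := by
    rw [← Real.exp_nat_mul, ← Real.exp_neg, mul_neg, mul_comm]
  have hne := exp_ne_zero (t * n)
  rw [h, pow_one, ← mul_div_mul_right _ _ hne, mul_assoc, sub_mul, inv_mul_cancel₀ hne, mul_one,
    one_mul]

lemma summable_div_exp_sub_one {t : ℝ} (ht : 0 < t) :
    Summable fun n : ℕ => (n : ℝ) / (rexp (t * n) - 1) :=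
  (summable_norm_pow_mul_geometric_div_one_sub 1 (norm_exp_neg_lt_one ht)).congr
    (mul_exp_neg_pow_div_one_sub t)

-- Expand both sides as the double series `∑ n * exp (-t * n * d)` over `n, d ≥ 1`.
lemma tsum_div_exp_sub_one {t : ℝ} (ht : 0 < t) :
    ∑' n : ℕ, (n : ℝ) / (rexp (t * n) - 1) = ∑' d : ℕ, ((2 * sinh (t * d / 2)) ^ 2)⁻¹ := by
  have hr := norm_exp_neg_lt_one ht
  have hinner (d : ℕ+) : ∑' n : ℕ+, (n : ℝ) ^ 1 * rexp (-t) ^ (d * n : ℕ)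
      = ((2 * sinh (t * d / 2)) ^ 2)⁻¹ := by
    have hd : ‖rexp (-(t * d))‖ < 1 := norm_exp_neg_lt_one (mul_pos ht (by exact_mod_cast d.pos))
    have hpow (n : ℕ) : (n : ℝ) ^ 1 * rexp (-t) ^ (d * n : ℕ) = n * rexp (-(t * d)) ^ n := by
      rw [pow_one, ← Real.exp_nat_mul, ← Real.exp_nat_mul]
      push_cast
      ring_nf
    rw [tsum_pnat_eq_tsum_of_eq_zero (f := fun n : ℕ => (n : ℝ) ^ 1 * rexp (-t) ^ (d * n : ℕ))
      (by simp), tsum_congr hpow, tsum_coe_mul_geometric_of_norm_lt_one hd,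
      exp_neg_div_one_sub_exp_neg_sq]
  calc ∑' n : ℕ, (n : ℝ) / (rexp (t * n) - 1)
      = ∑' n : ℕ+, (n : ℝ) ^ 1 * rexp (-t) ^ (n : ℕ) / (1 - rexp (-t) ^ (n : ℕ)) := by
        rw [tsum_congr fun n : ℕ+ => mul_exp_neg_pow_div_one_sub t n]
        exact (tsum_pnat_eq_tsum_of_eq_zero (f := fun n : ℕ => (n : ℝ) / (rexp (t * n) - 1))
          (by simp)).symm
    _ = ∑' d : ℕ+, ∑' n : ℕ+, (n : ℝ) ^ 1 * rexp (-t) ^ (d * n : ℕ) :=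
        (tsum_pow_div_one_sub_eq_tsum_sigma hr 1).trans (tsum_prod_pow_eq_tsum_sigma 1 hr).symm
    _ = ∑' d : ℕ, ((2 * sinh (t * d / 2)) ^ 2)⁻¹ := by
        rw [tsum_congr hinner]
        exact tsum_pnat_eq_tsum_of_eq_zero (f := fun d : ℕ => ((2 * sinh (t * d / 2)) ^ 2)⁻¹)
          (by simp)

lemma abs_tsum_div_exp_sub_one_sub_le {t : ℝ} (ht : 0 < t) :
    |∑' n : ℕ, (n : ℝ) / (rexp (t * n) - 1) - π ^ 2 / 6 / t ^ 2|
      ≤ (∑' d : ℕ, (d : ℝ) ^ (-(5 / 4) : ℝ)) * t ^ (-(5 / 4) : ℝ) := by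
  have hzeta : HasSum (fun d : ℕ => ((t * d) ^ 2)⁻¹) (π ^ 2 / 6 / t ^ 2) := by
    refine (hasSum_zeta_two.div_const (t ^ 2)).congr_fun fun d => ?_
    rw [mul_pow, mul_inv, one_div, div_eq_mul_inv, mul_comm]
  have hterm (d : ℕ) : ‖((t * d) ^ 2)⁻¹ - ((2 * sinh (t * d / 2)) ^ 2)⁻¹‖
      ≤ (d : ℝ) ^ (-(5 / 4) : ℝ) * t ^ (-(5 / 4) : ℝ) := by
    rw [← mul_rpow (Nat.cast_nonneg d) ht.le, mul_comm (d : ℝ)]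
    exact abs_inv_sq_sub_inv_two_mul_sinh_half_sq_le (by positivity)
  have hbound : HasSum (fun d : ℕ => (d : ℝ) ^ (-(5 / 4) : ℝ) * t ^ (-(5 / 4) : ℝ)) _ :=
    (Real.summable_nat_rpow.2 (by norm_num)).hasSum.mul_right _
  have hdiff := Summable.of_norm_bounded hbound.summable hterm
  have hsinh : Summable fun d : ℕ => ((2 * sinh (t * d / 2)) ^ 2)⁻¹ :=
    (hzeta.summable.sub hdiff).congr fun d => by ring
  rw [tsum_div_exp_sub_one ht, abs_sub_comm, ← (hzeta.sub hsinh.hasSum).tsum_eq]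
  exact tsum_of_norm_bounded hbound hterm

lemma sigmoid_neg_eq_sub {x : ℝ} (hx : x ≠ 0) :
    sigmoid (-x) = 1 / (rexp x - 1) - 2 / (rexp (2 * x) - 1) := by
  have hsub : rexp x - 1 ≠ 0 := by simpa [sub_eq_zero] using hx
  have hadd : rexp x + 1 ≠ 0 := by positivity
  have hfactor : rexp (2 * x) - 1 = (rexp x - 1) * (rexp x + 1) := by
    rw [two_mul, Real.exp_add]
    ring
  rw [sigmoid_def, neg_neg, hfactor, add_comm]
  field_simp
  ring

lemma hasSum_mul_sigmoid_neg {t : ℝ} (ht : 0 < t) :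
    HasSum (fun j : ℕ => 2 * (j * sigmoid (-(t * j))))
      (2 * (∑' n : ℕ, (n : ℝ) / (rexp (t * n) - 1)
        - 2 * ∑' n : ℕ, (n : ℝ) / (rexp (2 * t * n) - 1))) := by
  have h1 := (summable_div_exp_sub_one ht).hasSum
  have h2 := (summable_div_exp_sub_one (mul_pos two_pos ht)).hasSum
  refine ((h1.sub (h2.mul_left 2)).mul_left 2).congr_fun fun j => ?_
  rcases j.eq_zero_or_pos with rfl | hj
  · simp
  have : (0 : ℝ) < j := by exact_mod_cast hj
  rw [sigmoid_neg_eq_sub (by positivity), mul_assoc 2 t]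
  ring

lemma abs_tsum_mul_sigmoid_neg_sub_le {t : ℝ} (ht : 0 < t) :
    |∑' j : ℕ, 2 * (j * sigmoid (-(t * j))) - π ^ 2 / (6 * t ^ 2)|
      ≤ 6 * (∑' d : ℕ, (d : ℝ) ^ (-(5 / 4) : ℝ)) * t ^ (-(5 / 4) : ℝ) := by
  have ht2 : 0 < 2 * t := by positivity
  have h1 := abs_le.1 (abs_tsum_div_exp_sub_one_sub_le ht)
  have h2 := abs_le.1 (abs_tsum_div_exp_sub_one_sub_le ht2)
  have hC : 0 ≤ ∑' d : ℕ, (d : ℝ) ^ (-(5 / 4) : ℝ) := tsum_nonneg fun d => by positivity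
  have hmono := mul_le_mul_of_nonneg_left
    (rpow_le_rpow_of_nonpos ht (by linarith : t ≤ 2 * t) (by norm_num : (-(5 / 4) : ℝ) ≤ 0)) hC
  have hmain : π ^ 2 / (6 * t ^ 2) = 2 * (π ^ 2 / 6 / t ^ 2 - 2 * (π ^ 2 / 6 / (2 * t) ^ 2)) := by
    field_simp
    ring
  rw [(hasSum_mul_sigmoid_neg ht).tsum_eq, hmain, abs_le]
  constructor <;> linarith

/-- The mean of the total size of two independent random subsets of `{1, …, n}`, each containing
`j` with probability `sigmoid (-(t * j))`. -/
noncomputable def meanSize (t : ℝ) (n : ℕ) : ℝ := ∑ j ∈ Finset.Ioc 0 n, 2 * (j * sigmoid (-(t * j)))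

lemma sum_mul_sigmoid_neg_le {t : ℝ} (ht : 0 < t) (ht1 : t ≤ 1) {n : ℕ} (hn : 0 < n) (s : Finset ℕ)
    (hs : ∀ j ∈ s, n ≤ j) :
    ∑ j ∈ s, 2 * (j * sigmoid (-(t * j))) ≤ 36 / (n ^ 2 * t ^ 4) := by
  have : (0 : ℝ) < n := by exact_mod_cast hn
  have hterm : ∀ j ∈ s, 2 * (j * sigmoid (-(t * j))) ≤ 2 / n ^ 2 * (j ^ 3 * rexp (-(t * j))) := by
    intro j hj
    have hnj : (n : ℝ) ≤ j := by exact_mod_cast hs j hj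
    rw [div_mul_eq_mul_div, le_div_iff₀ (by positivity)]
    calc 2 * (j * sigmoid (-(t * j))) * (n : ℝ) ^ 2
        ≤ 2 * (j * rexp (-(t * j))) * j ^ 2 := by
          have := sigmoid_neg_le_exp_neg (t * j)
          gcongr
      _ = 2 * (j ^ 3 * rexp (-(t * j))) := by ring
  calc ∑ j ∈ s, 2 * (j * sigmoid (-(t * j)))
      ≤ 2 / n ^ 2 * ∑ j ∈ s, (j : ℝ) ^ 3 * rexp (-(t * j)) := by
        rw [Finset.mul_sum]
        exact Finset.sum_le_sum hterm
    _ ≤ 2 / n ^ 2 * (3 * (3 : ℕ).factorial / t ^ (3 + 1)) := by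
        gcongr
        exact sum_pow_mul_exp_neg_le_of_le_one 3 ht ht1 s
    _ = 36 / (n ^ 2 * t ^ 4) := by
        norm_num [Nat.factorial]
        field_simp
        norm_num

lemma abs_meanSize_sub_tsum_le {t : ℝ} (ht : 0 < t) (ht1 : t ≤ 1) {n : ℕ} (hn : 0 < n) :
    |meanSize t n - ∑' j : ℕ, 2 * (j * sigmoid (-(t * j)))| ≤ 36 / (n ^ 2 * t ^ 4) := by
  have hterm (j : ℕ) : 0 ≤ 2 * (j * sigmoid (-(t * j))) :=
    mul_nonneg two_pos.le (mul_nonneg j.cast_nonneg (sigmoid_nonneg _))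
  have hrange : meanSize t n = ∑ j ∈ Finset.range (n + 1), 2 * (j * sigmoid (-(t * j))) := by
    rw [meanSize, Finset.range_eq_Ico, Finset.sum_eq_sum_Ico_succ_bot n.succ_pos,
      Nat.cast_zero, zero_mul, mul_zero, zero_add]
    rfl
  rw [abs_sub_comm, hrange, sub_eq_of_eq_add'
    ((hasSum_mul_sigmoid_neg ht).summable.sum_add_tsum_nat_add (n + 1)).symm,
    abs_of_nonneg (tsum_nonneg fun j => hterm _)]
  refine Real.tsum_le_of_sum_le (fun j => hterm _) fun s => ?_
  have := sum_mul_sigmoid_neg_le ht ht1 hn (s.map (addRightEmbedding (n + 1))) (by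
    simp only [Finset.mem_map, addRightEmbedding_apply, forall_exists_index, and_imp]
    omega)
  rwa [Finset.sum_map] at this

/-! ### The variances of rank and size -/

/-- The variance of the difference of the cardinalities of two independent random subsets of
`{1, …, n}`, each containing `j` with probability `sigmoid (-(t * j))`. -/
noncomputable def rankVariance (t : ℝ) (n : ℕ) : ℝ := ∑ j ∈ Finset.Ioc 0 n, 2 * logisticPDF (t * j)

/-- The variance of the total size of two independent random subsets of `{1, …, n}`, each containing
`j` with probability `sigmoid (-(t * j))`. -/
noncomputable def sizeVariance (t : ℝ) (n : ℕ) : ℝ :=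
  ∑ j ∈ Finset.Ioc 0 n, 2 * ((j : ℝ) ^ 2 * logisticPDF (t * j))

lemma mul_rankVariance (t : ℝ) (n : ℕ) :
    t * rankVariance t n = 2 * ∑ j ∈ Finset.Ioc 0 n, t * logisticPDF (t * j) := by
  rw [rankVariance, Finset.mul_sum, Finset.mul_sum]
  exact Finset.sum_congr rfl fun j _ => by ring

lemma tendsto_mul_rankVariance {ι : Type*} {l : Filter ι} {t : ι → ℝ} {n : ι → ℕ}
    (ht : Tendsto t l (nhdsWithin 0 (Set.Ioi 0))) (htn : Tendsto (fun i => t i * n i) l atTop) :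
    Tendsto (fun i => t i * rankVariance (t i) (n i)) l (nhds 1) := by
  have hpos : ∀ᶠ i in l, 0 ≤ t i := (ht.eventually self_mem_nhdsWithin).mono fun _ => le_of_lt
  have htop : Tendsto (fun i => sigmoid (t i * n i)) l (nhds 1) := tendsto_sigmoid_atTop.comp htn
  have hzero : Tendsto (fun i => sigmoid (t i)) l (nhds (1 / 2)) := by
    simpa [Function.comp_def] using
      (continuous_sigmoid.tendsto 0).comp (tendsto_nhds_of_tendsto_nhdsWithin ht)
  simp only [mul_rankVariance]
  have hlower := (htop.sub hzero).const_mul 2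
  have hupper := (htop.sub_const (1 / 2)).const_mul 2
  rw [show (2 : ℝ) * (1 - 1 / 2) = 1 by norm_num] at hlower hupper
  refine tendsto_of_tendsto_of_tendsto_of_le_of_le' hlower hupper ?_ ?_
  · exact hpos.mono fun i hi => mul_le_mul_of_nonneg_left (le_sum_mul_logisticPDF hi _) two_pos.le
  · exact hpos.mono fun i hi => mul_le_mul_of_nonneg_left (sum_mul_logisticPDF_le hi _) two_pos.le

lemma pow_three_div_three_le_sum_sq (m : ℕ) :
    (m : ℝ) ^ 3 / 3 ≤ ∑ j ∈ Finset.Ioc 0 m, (j : ℝ) ^ 2 := by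
  induction m with
  | zero => simp
  | succ m ih =>
    rw [Finset.sum_Ioc_succ_top m.zero_le]
    push_cast
    nlinarith [(m.cast_nonneg : (0 : ℝ) ≤ m)]

lemma exists_nat_mul_le_one {t : ℝ} (ht : 0 < t) (ht1 : t ≤ 1) :
    ∃ m : ℕ, t * m ≤ 1 ∧ 1 ≤ 2 * (t * m) := by
  have hfloor : 1 ≤ ⌊1 / t⌋₊ := Nat.one_le_floor_iff _ |>.2 ((one_le_div ht).2 ht1)
  have hfloor : (1 : ℝ) ≤ ⌊1 / t⌋₊ := by exact_mod_cast hfloor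
  refine ⟨⌊1 / t⌋₊, (le_div_iff₀' ht).1 (Nat.floor_le (by positivity)), ?_⟩
  have := (div_lt_iff₀' ht).1 (Nat.lt_floor_add_one (1 / t))
  nlinarith

lemma sum_div_twelve_le_sum_logisticPDF_mul {t : ℝ} (ht : 0 < t) {m n : ℕ} (htm : t * m ≤ 1)
    (hmn : m ≤ n) {f : ℕ → ℝ} (hf : ∀ j, 0 ≤ f j) :
    (∑ j ∈ Finset.Ioc 0 m, f j) / 12 ≤ ∑ j ∈ Finset.Ioc 0 n, logisticPDF (t * j) * f j := by
  rw [Finset.sum_div]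
  calc ∑ j ∈ Finset.Ioc 0 m, f j / 12
      ≤ ∑ j ∈ Finset.Ioc 0 m, logisticPDF (t * j) * f j := by
        refine Finset.sum_le_sum fun j hj => ?_
        have hjm : (j : ℝ) ≤ m := by exact_mod_cast (Finset.mem_Ioc.1 hj).2
        have htj : t * j ≤ 1 := le_trans (by gcongr) htm
        have hpdf := one_div_twelve_le_logisticPDF (by positivity) htj
        linarith [mul_le_mul_of_nonneg_right hpdf (hf j)]
    _ ≤ ∑ j ∈ Finset.Ioc 0 n, logisticPDF (t * j) * f j :=
        Finset.sum_le_sum_of_subset_of_nonneg (Finset.Ioc_subset_Ioc_right hmn)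
          fun j _ _ => mul_nonneg (logisticPDF_pos _).le (hf j)

lemma nat_le_of_mul_le {t : ℝ} (ht : 0 < t) {m n : ℕ} (htm : t * m ≤ 1) (htn : 1 ≤ t * n) :
    m ≤ n := by
  exact_mod_cast le_of_mul_le_mul_left (htm.trans htn) ht

lemma one_le_mul_sizeVariance {t : ℝ} (ht : 0 < t) (ht1 : t ≤ 1) {n : ℕ} (htn : 1 ≤ t * n) :
    1 ≤ 144 * t ^ 3 * sizeVariance t n := by
  obtain ⟨m, htm, hm⟩ := exists_nat_mul_le_one ht ht1
  have hwindow := sum_div_twelve_le_sum_logisticPDF_mul ht htm (nat_le_of_mul_le ht htm htn)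
    (fun j => sq_nonneg (j : ℝ))
  have hV : sizeVariance t n = 2 * ∑ j ∈ Finset.Ioc 0 n, logisticPDF (t * j) * (j : ℝ) ^ 2 := by
    rw [sizeVariance, Finset.mul_sum]
    exact Finset.sum_congr rfl fun j _ => by ring
  have hmV : (m : ℝ) ^ 3 / 18 ≤ sizeVariance t n := by
    linarith [pow_three_div_three_le_sum_sq m]
  calc 1 ≤ (2 * (t * m)) ^ 3 := one_le_pow₀ hm
    _ = 144 * t ^ 3 * (m ^ 3 / 18) := by ring
    _ ≤ 144 * t ^ 3 * sizeVariance t n := by gcongr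

lemma mul_sizeVariance_le {t : ℝ} (ht : 0 < t) (ht1 : t ≤ 1) (n : ℕ) :
    t ^ 3 * sizeVariance t n ≤ 12 := by
  have hsum : sizeVariance t n ≤ 2 * ∑ j ∈ Finset.Ioc 0 n, (j : ℝ) ^ 2 * rexp (-(t * j)) := by
    rw [sizeVariance, Finset.mul_sum]
    gcongr with j
    exact logisticPDF_le_exp_neg _
  have hmoment := sum_pow_mul_exp_neg_le_of_le_one 2 ht ht1 (Finset.Ioc 0 n)
  calc t ^ 3 * sizeVariance t n
      ≤ t ^ 3 * (2 * (3 * (2 : ℕ).factorial / t ^ (2 + 1))) := by gcongr; linarith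
    _ = 12 := by
        norm_num [Nat.factorial]
        field_simp
        norm_num

lemma sizeVariance_pos {t : ℝ} (ht : 0 < t) (ht1 : t ≤ 1) {n : ℕ} (htn : 1 ≤ t * n) :
    0 < sizeVariance t n :=
  pos_of_mul_pos_right (one_pos.trans_le (one_le_mul_sizeVariance ht ht1 htn)) (by positivity)

/-! ### Domination of the characteristic function -/

lemma sum_cos_le {u : ℝ} (hu0 : 0 < u) (huπ : u ≤ π) (m : ℕ) :
    ∑ j ∈ Finset.Ioc 0 m, cos (j * u) ≤ π / u / 2 := by
  have hsum : ∑ j ∈ Finset.Ioc 0 m, cos (j * u) = ∑ i ∈ Finset.range m, cos (u * i + u) := by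
    have hshift (i : ℕ) : cos (u * i + u) = cos ((i + 1 : ℕ) * u) := by
      push_cast
      ring_nf
    simp only [hshift]
    rw [Finset.range_eq_Ico, Finset.sum_Ico_add' fun j : ℕ => cos (j * u)]
    rfl
  have hdirichlet : sin (u / 2) * ∑ j ∈ Finset.Ioc 0 m, cos (j * u) ≤ 1 / 2 := by
    have hprod := two_mul_sin_mul_cos (m * u / 2) ((m - 1) * u / 2 + u)
    rw [show m * u / 2 - ((m - 1) * u / 2 + u) = -(u / 2) by ring, sin_neg] at hprod
    have hsin : 0 ≤ sin (u / 2) := sin_nonneg_of_nonneg_of_le_pi (by linarith) (by linarith)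
    rw [hsum, sin_mul_sum_cos]
    linarith [sin_le_one (m * u / 2 + ((m - 1) * u / 2 + u))]
  have hjordan : u / π ≤ sin (u / 2) := by
    have := mul_le_sin (x := u / 2) (by linarith) (by linarith)
    rwa [show 2 / π * (u / 2) = u / π by ring] at this
  rcases le_total (∑ j ∈ Finset.Ioc 0 m, cos (j * u)) 0 with hneg | hpos
  · exact hneg.trans (by positivity)
  · have := (mul_le_mul_of_nonneg_right hjordan hpos).trans hdirichlet
    rw [div_mul_eq_mul_div, div_le_iff₀ pi_pos] at this
    rw [div_div, le_div_iff₀ (by positivity)]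
    linarith

lemma mul_min_le_sum_one_sub_cos {u : ℝ} (hu : |u| ≤ π) (m : ℕ) :
    m * min ((m * u) ^ 2) 1 / 15 ≤ ∑ j ∈ Finset.Ioc 0 m, (1 - cos (j * u)) := by
  have hm : (0 : ℝ) ≤ m := m.cast_nonneg
  wlog hu0 : 0 ≤ u generalizing u
  · have := this (u := -u) (by rwa [abs_neg]) (by linarith)
    simpa only [mul_neg, neg_sq, cos_neg] using this
  rw [abs_of_nonneg hu0] at hu
  rcases le_or_gt (m * u) π with h | h
  · have hterm : ∀ j ∈ Finset.Ioc 0 m, u ^ 2 / 5 * j ^ 2 ≤ 1 - cos (j * u) := by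
      intro j hj
      have hjm : (j : ℝ) ≤ m := by exact_mod_cast (Finset.mem_Ioc.1 hj).2
      have hj : |j * u| ≤ π := by
        rw [abs_of_nonneg (by positivity)]
        exact le_trans (by gcongr) h
      have hπ : 1 / 5 ≤ 2 / π ^ 2 := by
        rw [div_le_div_iff₀ (by norm_num) (by positivity)]
        nlinarith [pi_lt_d2, pi_pos]
      have hcos := cos_le_one_sub_mul_cos_sq hj
      have := mul_le_mul_of_nonneg_right hπ (sq_nonneg (j * u))
      linarith
    have hmin := mul_le_mul_of_nonneg_left (min_le_left ((m * u) ^ 2) 1) hm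
    calc m * min ((m * u) ^ 2) 1 / 15 ≤ u ^ 2 / 5 * (m ^ 3 / 3) := by linarith
      _ ≤ u ^ 2 / 5 * ∑ j ∈ Finset.Ioc 0 m, (j : ℝ) ^ 2 := by
          gcongr
          exact pow_three_div_three_le_sum_sq m
      _ ≤ ∑ j ∈ Finset.Ioc 0 m, (1 - cos (j * u)) := by
          rw [Finset.mul_sum]
          exact Finset.sum_le_sum hterm
  · have hupos : 0 < u := hu0.lt_of_ne fun h0 => by simp [← h0, pi_pos.not_gt] at h
    have hcos : ∑ j ∈ Finset.Ioc 0 m, cos (j * u) ≤ m / 2 :=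
      (sum_cos_le hupos hu m).trans (by gcongr; exact (div_le_iff₀ hupos).2 h.le)
    have hmin := mul_le_mul_of_nonneg_left (min_le_right ((m * u) ^ 2) 1) hm
    rw [Finset.sum_sub_distrib, Finset.sum_const, Nat.card_Ioc, nsmul_one, Nat.sub_zero]
    linarith

/-- The characteristic function of the rank `|B| - |A|` and the total size of two independent random
subsets `A`, `B` of `{c + 1, …, n}`, each containing `j` with probability `sigmoid (-(t * j))`. -/
noncomputable def tiltedCharFun (c : ℕ) (t : ℝ) (n : ℕ) (φ u : ℝ) : ℂ :=
  ∏ j ∈ Finset.Ioc c n, bernoulliCharFun (sigmoid (-(t * j))) (φ + j * u)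
    * bernoulliCharFun (sigmoid (-(t * j))) (-φ + j * u)

lemma norm_bernoulliCharFun_mul_le {φ : ℝ} (hφ : 1 / 2 ≤ cos φ) (x y : ℝ) :
    ‖bernoulliCharFun (sigmoid (-x)) (φ + y) * bernoulliCharFun (sigmoid (-x)) (-φ + y)‖
      ≤ rexp (-(logisticPDF x * (1 - cos y))) := by
  rw [norm_mul]
  refine (mul_le_mul (norm_bernoulliCharFun_le_exp _ _) (norm_bernoulliCharFun_le_exp _ _)
    (norm_nonneg _) (exp_pos _).le).trans ?_
  rw [← Real.exp_add, exp_le_exp, ← logisticPDF_eq_mul_one_sub]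
  have hcos : 1 - cos y ≤ (1 - cos (φ + y)) + (1 - cos (-φ + y)) := by
    rw [cos_add, cos_add, cos_neg, sin_neg]
    nlinarith [cos_le_one φ, cos_le_one y]
  have := mul_le_mul_of_nonneg_left hcos (logisticPDF_pos x).le
  linarith

lemma norm_tiltedCharFun_le_exp {c n : ℕ} (hcn : c ≤ n) {t φ : ℝ} (ht : 0 ≤ t) (hφ : 1 / 2 ≤ cos φ)
    (u : ℝ) :
    ‖tiltedCharFun c t n φ u‖
      ≤ rexp (2 * c) * rexp (-∑ j ∈ Finset.Ioc 0 n, logisticPDF (t * j) * (1 - cos (j * u))) := by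
  have hsplit := Finset.sum_Ioc_consecutive (fun j : ℕ => logisticPDF (t * j) * (1 - cos (j * u)))
    c.zero_le hcn
  have hsmall : ∑ j ∈ Finset.Ioc 0 c, logisticPDF (t * j) * (1 - cos (j * u)) ≤ c * 2 := by
    have hterm : ∀ j ∈ Finset.Ioc 0 c, logisticPDF (t * j) * (1 - cos (j * u)) ≤ 2 := by
      intro j _
      have hle : logisticPDF (t * j) ≤ 1 :=
        (logisticPDF_le_exp_neg _).trans (exp_le_one_iff.2 (neg_nonpos.2 (by positivity)))
      nlinarith [cos_le_one (j * u), neg_one_le_cos (j * u), logisticPDF_pos (t * j)]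
    simpa using Finset.sum_le_card_nsmul _ _ _ hterm
  calc ‖tiltedCharFun c t n φ u‖
      ≤ ∏ j ∈ Finset.Ioc c n, rexp (-(logisticPDF (t * j) * (1 - cos (j * u)))) := by
        rw [tiltedCharFun, norm_prod]
        exact Finset.prod_le_prod (fun _ _ => norm_nonneg _)
          fun j _ => norm_bernoulliCharFun_mul_le hφ _ _
    _ ≤ _ := by
        rw [← Real.exp_sum, ← Real.exp_add, exp_le_exp, Finset.sum_neg_distrib]
        linarith

lemma one_add_add_pow_three_le_exp {x : ℝ} (hx : 0 ≤ x) : 1 + x + x ^ 3 ≤ 7 * rexp x := by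
  have hcubic := pow_div_factorial_le_exp x hx 3
  norm_num [Nat.factorial] at hcubic
  linarith [add_one_le_exp x]

/-- With `D` the exponent in `norm_tiltedCharFun_le_exp`, this says `V * u ^ 2 ≲ D + D ^ 3`: the
quadratic regime is `D ≈ V * u ^ 2`, while for `u` of order one only `D ≳ 1 / t ≈ V ^ (1 / 3)`. -/
lemma exists_sizeVariance_mul_sq_le {t : ℝ} (ht : 0 < t) (ht1 : t ≤ 1) {n : ℕ} (htn : 1 ≤ t * n)
    {u : ℝ} (hu : |u| ≤ π) :
    ∃ D, 0 ≤ D ∧ D / 180 ≤ ∑ j ∈ Finset.Ioc 0 n, logisticPDF (t * j) * (1 - cos (j * u)) ∧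
      sizeVariance t n * u ^ 2 ≤ 960 * (D + D ^ 3) := by
  obtain ⟨m, htm, hm⟩ := exists_nat_mul_le_one ht ht1
  have hV : sizeVariance t n ≤ 96 * m ^ 3 := by
    refine le_of_mul_le_mul_left ?_ (pow_pos ht 3)
    have := one_le_pow₀ hm (n := 3)
    linarith [mul_sizeVariance_le ht ht1 n]
  have hwindow := sum_div_twelve_le_sum_logisticPDF_mul ht htm (nat_le_of_mul_le ht htm htn)
    (f := fun j => 1 - cos (j * u)) fun j => sub_nonneg.2 (cos_le_one _)
  have hm0 : (0 : ℝ) ≤ m := m.cast_nonneg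
  refine ⟨m * min ((m * u) ^ 2) 1, by positivity, ?_, ?_⟩
  · linarith [mul_min_le_sum_one_sub_cos hu m]
  · have hVu := mul_le_mul_of_nonneg_right hV (sq_nonneg u)
    rcases le_total ((m * u) ^ 2) 1 with h | h
    · rw [min_eq_left h]
      nlinarith [(by positivity : 0 ≤ m * (m * u) ^ 2), (by positivity : 0 ≤ (m * (m * u) ^ 2) ^ 3)]
    · rw [min_eq_right h, mul_one]
      have hu2 : u ^ 2 ≤ 10 := by
        rw [← sq_abs]
        nlinarith [pi_lt_d2, pi_pos, abs_nonneg u]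
      nlinarith [pow_nonneg hm0 3]

lemma norm_tiltedCharFun_le {c n : ℕ} (hcn : c ≤ n) {t φ : ℝ} (ht : 0 < t) (ht1 : t ≤ 1)
    (htn : 1 ≤ t * n) (hφ : 1 / 2 ≤ cos φ) {u : ℝ} (hu : |u| ≤ π) :
    ‖tiltedCharFun c t n φ u‖ ≤ 10 ^ 11 * rexp (2 * c) * (1 + sizeVariance t n * u ^ 2)⁻¹ := by
  obtain ⟨D, hD0, hD, hVu⟩ := exists_sizeVariance_mul_sq_le ht ht1 htn hu
  have hV : 0 ≤ sizeVariance t n * u ^ 2 :=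
    mul_nonneg (sizeVariance_pos ht ht1 htn).le (sq_nonneg u)
  have hexp := one_add_add_pow_three_le_exp (x := D / 180) (by positivity)
  have hpow : 1 + sizeVariance t n * u ^ 2 ≤ 10 ^ 11 * rexp (D / 180) := by
    nlinarith [pow_nonneg hD0 3]
  calc ‖tiltedCharFun c t n φ u‖ ≤ rexp (2 * c) * rexp (-(D / 180)) :=
        (norm_tiltedCharFun_le_exp hcn ht.le hφ u).trans (by gcongr)
    _ ≤ 10 ^ 11 * rexp (2 * c) * (1 + sizeVariance t n * u ^ 2)⁻¹ := by
        rw [← div_eq_mul_inv, le_div_iff₀ (by positivity), Real.exp_neg]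
        have := exp_pos (D / 180)
        field_simp
        linarith [hpow]

/-! ### The Gaussian limit of the characteristic function -/

/-- The tilting parameter `t` for which random subsets `A`, `B` of `{1, …, N}` containing `j` with
probability `sigmoid (-(t * j))` have mean total size close to `N`. -/
noncomputable def tilt (N : ℕ) : ℝ := π / √(6 * N)

lemma tilt_pos {N : ℕ} (hN : 0 < N) : 0 < tilt N := by
  rw [tilt]
  positivity

lemma pi_sq_div_tilt_sq {N : ℕ} (hN : 0 < N) : π ^ 2 / (6 * tilt N ^ 2) = N := by
  have : (0 : ℝ) < N := by exact_mod_cast hN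
  rw [tilt, div_pow, sq_sqrt (by positivity)]
  field_simp

lemma tendsto_tilt : Tendsto tilt atTop (nhdsWithin 0 (Set.Ioi 0)) := by
  refine tendsto_nhdsWithin_iff.2 ⟨tendsto_const_nhds.div_atTop (tendsto_sqrt_atTop.comp
    (tendsto_natCast_atTop_atTop.const_mul_atTop (by norm_num))), ?_⟩
  exact (eventually_gt_atTop 0).mono fun N hN => tilt_pos hN

lemma tendsto_tilt_mul : Tendsto (fun N : ℕ => tilt N * N) atTop atTop := by
  have h : Tendsto (fun N : ℕ => π ^ 2 / 6 * (tilt N)⁻¹) atTop atTop :=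
    (tendsto_inv_nhdsGT_zero.comp tendsto_tilt).const_mul_atTop (by positivity)
  refine h.congr' ((eventually_gt_atTop 0).mono fun N hN => ?_)
  have := tilt_pos hN
  simp only [← pi_sq_div_tilt_sq hN]
  field_simp

lemma eventually_tilt : ∀ᶠ N : ℕ in atTop, 0 < tilt N ∧ tilt N ≤ 1 ∧ 1 ≤ tilt N * N := by
  have hle := (tendsto_nhds_of_tendsto_nhdsWithin tendsto_tilt).eventually_le_const one_pos
  filter_upwards [eventually_gt_atTop 0, hle, tendsto_tilt_mul.eventually_ge_atTop 1]
    with N hN hle hge using ⟨tilt_pos hN, hle, hge⟩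

lemma tendsto_sqrt_tilt : Tendsto (fun N => √(tilt N)) atTop (nhds 0) := by
  simpa [Function.comp_def] using
    (continuous_sqrt.tendsto 0).comp (tendsto_nhds_of_tendsto_nhdsWithin tendsto_tilt)

lemma abs_meanSize_tilt_sub_le {N : ℕ} (hN : 0 < N) (ht1 : tilt N ≤ 1) :
    |meanSize (tilt N) N - N|
      ≤ (6 * (∑' d : ℕ, (d : ℝ) ^ (-(5 / 4) : ℝ)) + 16) * tilt N ^ (-(5 / 4) : ℝ) := by
  have ht := tilt_pos hN
  have htail := abs_meanSize_sub_tsum_le ht ht1 hN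
  have hmain := abs_tsum_mul_sigmoid_neg_sub_le ht
  have hconst : 36 / ((N : ℝ) ^ 2 * tilt N ^ 4) ≤ 16 := by
    have hπ : 3 ^ 4 ≤ π ^ 4 := pow_le_pow_left₀ (by norm_num) pi_gt_three.le 4
    have hN4 : (N : ℝ) ^ 2 * tilt N ^ 4 = π ^ 4 / 36 := by
      rw [← pi_sq_div_tilt_sq hN]
      field_simp
      norm_num
    rw [hN4, div_le_iff₀ (by positivity)]
    linarith
  have hone : 1 ≤ tilt N ^ (-(5 / 4) : ℝ) :=
    one_le_rpow_of_pos_of_le_one_of_nonpos ht ht1 (by norm_num)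
  rw [pi_sq_div_tilt_sq hN] at hmain
  linarith [abs_sub_le (meanSize (tilt N) N) (∑' j : ℕ, 2 * (j * sigmoid (-(tilt N * j)))) N]

lemma sum_mul_abs_pow_three_le {t : ℝ} (ht : 0 < t) (ht1 : t ≤ 1) (n : ℕ) (φ u : ℝ) :
    ∑ j ∈ Finset.Ioc 0 n, sigmoid (-(t * j)) * |φ + j * u| ^ 3
      ≤ 12 * |φ| ^ 3 / t + 72 * |u| ^ 3 / t ^ 4 := by
  have hterm : ∀ j ∈ Finset.Ioc 0 n, sigmoid (-(t * j)) * |φ + j * u| ^ 3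
      ≤ 4 * |φ| ^ 3 * ((j : ℝ) ^ 0 * rexp (-(t * j)))
        + 4 * |u| ^ 3 * ((j : ℝ) ^ 3 * rexp (-(t * j))) := by
    intro j _
    have hcube : |φ + j * u| ^ 3 ≤ 4 * (|φ| ^ 3 + (j * |u|) ^ 3) := by
      calc |φ + j * u| ^ 3 ≤ (|φ| + j * |u|) ^ 3 := by
            gcongr
            simpa [abs_mul] using abs_add_le φ (j * u)
        _ ≤ 2 ^ (3 - 1) * (|φ| ^ 3 + (j * |u|) ^ 3) :=
            add_pow_le (abs_nonneg φ) (by positivity) 3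
        _ = 4 * (|φ| ^ 3 + (j * |u|) ^ 3) := by norm_num
    calc sigmoid (-(t * j)) * |φ + j * u| ^ 3
        ≤ rexp (-(t * j)) * (4 * (|φ| ^ 3 + (j * |u|) ^ 3)) := by
          gcongr
          exact sigmoid_neg_le_exp_neg _
      _ = _ := by ring
  have hmoment (k : ℕ) := sum_pow_mul_exp_neg_le_of_le_one k ht ht1 (Finset.Ioc 0 n)
  calc _ ≤ 4 * |φ| ^ 3 * (3 * (0 : ℕ).factorial / t ^ (0 + 1))
        + 4 * |u| ^ 3 * (3 * (3 : ℕ).factorial / t ^ (3 + 1)) := by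
        refine (Finset.sum_le_sum hterm).trans ?_
        rw [Finset.sum_add_distrib, ← Finset.mul_sum, ← Finset.mul_sum]
        gcongr <;> exact hmoment _
    _ = 12 * |φ| ^ 3 / t + 72 * |u| ^ 3 / t ^ 4 := by
        norm_num [Nat.factorial]
        ring

lemma norm_centered_tiltedCharFun_sub_le {t : ℝ} (ht : 0 < t) (ht1 : t ≤ 1) (n : ℕ) (φ u : ℝ) :
    ‖tiltedCharFun 0 t n φ u * Complex.exp (-(u * meanSize t n : ℝ) * Complex.I)
      - rexp (-((φ ^ 2 * rankVariance t n + u ^ 2 * sizeVariance t n) / 2))‖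
      ≤ 120 * |φ| ^ 3 / t + 720 * |u| ^ 3 / t ^ 4 := by
  have h := norm_centered_prod_bernoulliCharFun_sub_le
    (Finset.Ioc 0 n ×ˢ (Finset.univ : Finset Bool)) (p := fun i => sigmoid (-(t * i.1)))
    (fun i _ => sigmoid_neg_mem_Icc _) fun i => cond i.2 φ (-φ) + i.1 * u
  simp only [Finset.prod_product, Finset.sum_product, Fintype.prod_bool, Fintype.sum_bool,
    cond_true, cond_false] at h
  have hmean : ∑ j ∈ Finset.Ioc 0 n,
      (sigmoid (-(t * j)) * (φ + j * u) + sigmoid (-(t * j)) * (-φ + j * u))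
      = u * meanSize t n := by
    rw [meanSize, Finset.mul_sum]
    exact Finset.sum_congr rfl fun j _ => by ring
  have hvar : ∑ j ∈ Finset.Ioc 0 n,
      (sigmoid (-(t * j)) * (1 - sigmoid (-(t * j))) * (φ + j * u) ^ 2
      + sigmoid (-(t * j)) * (1 - sigmoid (-(t * j))) * (-φ + j * u) ^ 2)
      = φ ^ 2 * rankVariance t n + u ^ 2 * sizeVariance t n := by
    rw [rankVariance, sizeVariance, Finset.mul_sum, Finset.mul_sum, ← Finset.sum_add_distrib]
    refine Finset.sum_congr rfl fun j _ => ?_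
    rw [← logisticPDF_eq_mul_one_sub]
    ring
  rw [hmean, hvar, Finset.sum_add_distrib] at h
  refine h.trans ?_
  have hpos := sum_mul_abs_pow_three_le ht ht1 n φ u
  have hneg := sum_mul_abs_pow_three_le ht ht1 n (-φ) u
  rw [abs_neg] at hneg
  calc _ ≤ 5 * ((12 * |φ| ^ 3 / t + 72 * |u| ^ 3 / t ^ 4)
        + (12 * |φ| ^ 3 / t + 72 * |u| ^ 3 / t ^ 4)) := by gcongr
    _ = 120 * |φ| ^ 3 / t + 720 * |u| ^ 3 / t ^ 4 := by ring

/-- The standard deviation of the total size at the saddle point `t = tilt N`. -/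
noncomputable def sizeStd (N : ℕ) : ℝ := √(sizeVariance (tilt N) N)

lemma eventually_sizeStd_pos : ∀ᶠ N in atTop, 0 < sizeStd N := by
  filter_upwards [eventually_tilt] with N ⟨ht, ht1, htn⟩
  exact sqrt_pos.2 (sizeVariance_pos ht ht1 htn)

lemma eventually_inv_sizeStd_le : ∀ᶠ N in atTop, (sizeStd N)⁻¹ ≤ 12 * √(tilt N) ^ 3 := by
  filter_upwards [eventually_tilt, eventually_sizeStd_pos] with N ⟨ht, ht1, htn⟩ hσ
  have hV := one_le_mul_sizeVariance ht ht1 htn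
  have hsq : (sizeStd N * (12 * √(tilt N) ^ 3)) ^ 2
      = 144 * tilt N ^ 3 * sizeVariance (tilt N) N := by
    rw [mul_pow, mul_pow, pow_right_comm, sq_sqrt ht.le, sizeStd,
      sq_sqrt (sizeVariance_pos ht ht1 htn).le]
    ring
  rwa [inv_le_iff_one_le_mul₀' hσ, ← one_le_sq_iff₀ (by positivity), hsq]

lemma tendsto_inv_sizeStd : Tendsto (fun N => (sizeStd N)⁻¹) atTop (nhds 0) := by
  refine squeeze_zero' (Eventually.of_forall fun N => inv_nonneg.2 (sqrt_nonneg _))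
    eventually_inv_sizeStd_le ?_
  simpa using (tendsto_sqrt_tilt.pow 3).const_mul 12

lemma tendsto_meanSize_sub_div_sizeStd :
    Tendsto (fun N => (meanSize (tilt N) N - N) / sizeStd N) atTop (nhds 0) := by
  set C := 6 * (∑' d : ℕ, (d : ℝ) ^ (-(5 / 4) : ℝ)) + 16
  have hlim : Tendsto (fun N => C * 12 * √(tilt N) ^ (1 / 2 : ℝ)) atTop (nhds 0) := by
    simpa using ((continuous_rpow_const (q := 1 / 2) (by norm_num)).tendsto 0).comp
      tendsto_sqrt_tilt |>.const_mul (C * 12)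
  refine squeeze_zero_norm' ?_ hlim
  filter_upwards [eventually_gt_atTop 0, eventually_tilt, eventually_sizeStd_pos,
    eventually_inv_sizeStd_le] with N hN ⟨ht, ht1, _⟩ hσ hinv
  have hpow : tilt N ^ (-(5 / 4) : ℝ) * √(tilt N) ^ 3 = √(tilt N) ^ (1 / 2 : ℝ) := by
    have hs := sqrt_pos.2 ht
    nth_rewrite 1 [← sq_sqrt ht.le]
    rw [← rpow_natCast, ← rpow_natCast, ← rpow_mul hs.le, ← rpow_add hs]
    norm_num
  rw [norm_eq_abs, abs_div, abs_of_pos hσ, div_eq_mul_inv]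
  calc |meanSize (tilt N) N - N| * (sizeStd N)⁻¹
      ≤ C * tilt N ^ (-(5 / 4) : ℝ) * (12 * √(tilt N) ^ 3) :=
        mul_le_mul (abs_meanSize_tilt_sub_le hN ht1) hinv (by positivity)
          ((abs_nonneg _).trans (abs_meanSize_tilt_sub_le hN ht1))
    _ = C * 12 * (tilt N ^ (-(5 / 4) : ℝ) * √(tilt N) ^ 3) := by ring
    _ = C * 12 * √(tilt N) ^ (1 / 2 : ℝ) := by rw [hpow]

lemma tendsto_gaussian_error (θ v : ℝ) :
    Tendsto (fun N => 120 * |θ * √(tilt N)| ^ 3 / tilt N + 720 * |v / sizeStd N| ^ 3 / tilt N ^ 4)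
      atTop (nhds 0) := by
  have hlim : Tendsto (fun N => (120 * |θ| ^ 3 + 720 * (12 * |v|) ^ 3) * √(tilt N)) atTop
      (nhds 0) := by
    simpa using tendsto_sqrt_tilt.const_mul (120 * |θ| ^ 3 + 720 * (12 * |v|) ^ 3)
  refine squeeze_zero' ?_ ?_ hlim
  · filter_upwards [eventually_tilt] with N ⟨ht, _⟩
    positivity
  filter_upwards [eventually_tilt, eventually_sizeStd_pos, eventually_inv_sizeStd_le]
    with N ⟨ht, _⟩ hσ hinv
  have hs := sqrt_pos.2 ht
  have hv : |v / sizeStd N| ≤ 12 * |v| * √(tilt N) ^ 3 := by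
    rw [abs_div, abs_of_pos hσ, div_eq_mul_inv]
    linarith [mul_le_mul_of_nonneg_left hinv (abs_nonneg v)]
  have ht2 : tilt N = √(tilt N) ^ 2 := (sq_sqrt ht.le).symm
  calc 120 * |θ * √(tilt N)| ^ 3 / tilt N + 720 * |v / sizeStd N| ^ 3 / tilt N ^ 4
      ≤ 120 * (|θ| * √(tilt N)) ^ 3 / tilt N
        + 720 * (12 * |v| * √(tilt N) ^ 3) ^ 3 / tilt N ^ 4 := by
        rw [abs_mul, abs_of_pos hs]
        gcongr
    _ = (120 * |θ| ^ 3 + 720 * (12 * |v|) ^ 3) * √(tilt N) := by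
        rw [ht2, sqrt_sq hs.le]
        field_simp

lemma tendsto_centered_tiltedCharFun (θ v : ℝ) :
    Tendsto (fun N => tiltedCharFun 0 (tilt N) N (θ * √(tilt N)) (v / sizeStd N)
        * Complex.exp (-(v / sizeStd N * meanSize (tilt N) N : ℝ) * Complex.I)) atTop
      (nhds (rexp (-((θ ^ 2 + v ^ 2) / 2)) : ℂ)) := by
  have hgauss : Tendsto (fun N => (rexp (-(((θ * √(tilt N)) ^ 2 * rankVariance (tilt N) N
      + (v / sizeStd N) ^ 2 * sizeVariance (tilt N) N) / 2)) : ℂ)) atTop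
      (nhds (rexp (-((θ ^ 2 + v ^ 2) / 2)) : ℂ)) := by
    have hrank := (tendsto_mul_rankVariance tendsto_tilt tendsto_tilt_mul).const_mul (θ ^ 2)
    rw [mul_one] at hrank
    have hexp : Continuous fun x : ℝ => (rexp (-((x + v ^ 2) / 2)) : ℂ) := by fun_prop
    refine ((hexp.tendsto _).comp hrank).congr' ?_
    filter_upwards [eventually_tilt] with N ⟨ht, ht1, htn⟩
    have hV := sizeVariance_pos ht ht1 htn
    rw [Function.comp_apply, mul_pow, sq_sqrt ht.le, div_pow, sizeStd, sq_sqrt hV.le,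
      div_mul_cancel₀ _ hV.ne', mul_assoc]
  refine (tendsto_iff_of_dist (squeeze_zero' (Eventually.of_forall fun N => dist_nonneg) ?_
    (tendsto_gaussian_error θ v))).1 hgauss
  filter_upwards [eventually_tilt] with N ⟨ht, ht1, _⟩
  rw [dist_comm, dist_eq_norm]
  exact norm_centered_tiltedCharFun_sub_le ht ht1 N _ _

lemma tendsto_tiltedCharFun_nhds_one (c : ℕ) (θ v : ℝ) :
    Tendsto (fun N => tiltedCharFun 0 (tilt N) c (θ * √(tilt N)) (v / sizeStd N)) atTop
      (nhds 1) := by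
  have hcont : Continuous fun x : ℝ × ℝ × ℝ => tiltedCharFun 0 x.1 c x.2.1 x.2.2 := by
    unfold tiltedCharFun bernoulliCharFun
    have := continuous_sigmoid
    fun_prop
  have hone : tiltedCharFun 0 0 c 0 0 = 1 := by simp [tiltedCharFun, bernoulliCharFun]
  have hφ : Tendsto (fun N => θ * √(tilt N)) atTop (nhds 0) := by
    simpa using tendsto_sqrt_tilt.const_mul θ
  have hu : Tendsto (fun N => v / sizeStd N) atTop (nhds 0) := by
    simpa [div_eq_mul_inv] using tendsto_inv_sizeStd.const_mul v
  have ht := tendsto_nhds_of_tendsto_nhdsWithin tendsto_tilt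
  simpa only [hone, Function.comp_def] using
    (hcont.tendsto (0, 0, 0)).comp (ht.prodMk_nhds (hφ.prodMk_nhds hu))

lemma tiltedCharFun_mul {c n : ℕ} (hcn : c ≤ n) (t φ u : ℝ) :
    tiltedCharFun 0 t c φ u * tiltedCharFun c t n φ u = tiltedCharFun 0 t n φ u :=
  Finset.prod_Ioc_consecutive _ c.zero_le hcn

lemma tendsto_exp_mul_tiltedCharFun (c d : ℕ) (θ v : ℝ) :
    Tendsto (fun N : ℕ => Complex.exp ((v / sizeStd N * (d - N) : ℝ) * Complex.I)
        * tiltedCharFun c (tilt N) N (θ * √(tilt N)) (v / sizeStd N)) atTop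
      (nhds (rexp (-((θ ^ 2 + v ^ 2) / 2)) : ℂ)) := by
  have hfactor := tendsto_tiltedCharFun_nhds_one c θ v
  have hphase : Tendsto (fun N : ℕ => Complex.exp
      ((v * ((meanSize (tilt N) N - N) / sizeStd N + d * (sizeStd N)⁻¹) : ℝ) * Complex.I)) atTop
      (nhds 1) := by
    have hcont : Continuous fun x : ℝ => Complex.exp ((v * x : ℝ) * Complex.I) := by fun_prop
    simpa [Function.comp_def] using (hcont.tendsto _).comp (tendsto_meanSize_sub_div_sizeStd.add
      (tendsto_inv_sizeStd.const_mul (d : ℝ)))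
  have hlim := ((tendsto_centered_tiltedCharFun θ v).mul hphase).div hfactor one_ne_zero
  rw [mul_one, div_one] at hlim
  refine hlim.congr' ?_
  filter_upwards [eventually_ge_atTop c, hfactor.eventually_ne one_ne_zero] with N hcN hne
  rw [Pi.div_apply, ← tiltedCharFun_mul hcN, mul_assoc, mul_assoc, mul_div_cancel_left₀ _ hne,
    ← Complex.exp_add, mul_comm]
  congr 2
  push_cast
  ring

/-! ### Pairs of sets as Fourier coefficients -/

lemma integral_exp_intCast_mul_I (k : ℤ) :
    ∫ u in (-π)..π, Complex.exp ((u * k : ℝ) * Complex.I) = if k = 0 then 2 * π else 0 := by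
  split_ifs with hk
  · simp [hk, two_mul]
  have hne : (k : ℂ) * Complex.I ≠ 0 := by simp [hk]
  have hexp (u : ℝ) : Complex.exp ((u * k : ℝ) * Complex.I) = Complex.exp (k * Complex.I * u) := by
    congr 1
    push_cast
    ring
  have hperiod : Complex.exp (k * Complex.I * π) = Complex.exp (k * Complex.I * (-π : ℝ)) :=
    Complex.exp_eq_exp_iff_exists_int.2 ⟨k, by push_cast; ring⟩
  simp_rw [hexp]
  rw [integral_exp_mul_complex hne, hperiod, sub_self, zero_div, Complex.ofReal_zero]

-- Cauchy's formula on the circle of radius `rexp (-t)`, parametrised by `Complex.exp (-t + u * I)`.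
lemma sum_filter_eq_zero_eq_integral {ι : Type*} (s : Finset ι) (w : ι → ℂ) (f : ι → ℤ) (t : ℝ) :
    ∑ i ∈ s with f i = 0, w i
      = (2 * π)⁻¹ * ∫ u in (-π)..π, ∑ i ∈ s, w i * Complex.exp (f i * (-t + u * Complex.I)) := by
  have hexp (i : ι) (u : ℝ) : w i * Complex.exp (f i * (-t + u * Complex.I))
      = w i * Complex.exp (-(f i * t)) * Complex.exp ((u * f i : ℝ) * Complex.I) := by
    rw [mul_assoc, ← Complex.exp_add]
    congr 2
    push_cast
    ring
  simp_rw [hexp]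
  rw [intervalIntegral.integral_finsetSum fun i _ =>
    Continuous.intervalIntegrable (by fun_prop) _ _, Finset.sum_filter, Finset.mul_sum]
  refine Finset.sum_congr rfl fun i _ => ?_
  rw [intervalIntegral.integral_const_mul, integral_exp_intCast_mul_I]
  split_ifs with hi
  · have : (π : ℂ) ≠ 0 := by exact_mod_cast pi_ne_zero
    simp only [hi, Int.cast_zero, zero_mul, neg_zero, Complex.exp_zero]
    push_cast
    field_simp
  · simp

lemma prod_one_add_exp (s : Finset ℕ) (a z : ℂ) :
    ∏ j ∈ s, (1 + Complex.exp (a + j * z))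
      = ∑ A ∈ s.powerset, Complex.exp (A.card * a + (∑ j ∈ A, j : ℕ) * z) := by
  simp [Finset.prod_one_add, ← Complex.exp_sum, Finset.sum_add_distrib, Finset.sum_mul]

/-- The pairs of sets of integers in `(c, N]` of total size `N - d`. -/
def boundedPairs (c d N : ℕ) : Finset (Finset ℕ × Finset ℕ) :=
  {p ∈ (Finset.Ioc c N).powerset ×ˢ (Finset.Ioc c N).powerset |
    ∑ j ∈ p.1, j + ∑ j ∈ p.2, j + d = N}

/-- The rank of the strongly concave composition with `p.1` and `p.2` as the sets of parts to the
left and to the right of its central part. -/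
def pairRank (p : Finset ℕ × Finset ℕ) : ℤ := p.2.card - p.1.card

/-- The trigonometric sum of the ranks of the pairs in `boundedPairs c d N`. -/
noncomputable def rankSum (c d N : ℕ) (φ : ℝ) : ℂ :=
  ∑ p ∈ boundedPairs c d N, Complex.exp ((φ * pairRank p : ℝ) * Complex.I)

/-- The sum of `rexp (-(t * m))` over all pairs of subsets of `{c + 1, …, n}`, where `m` is the
total size of the pair. -/
noncomputable def boltzmannSum (c : ℕ) (t : ℝ) (n : ℕ) : ℝ :=
  ∏ j ∈ Finset.Ioc c n, (1 + rexp (-(t * j))) ^ 2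

lemma boltzmannSum_pos (c : ℕ) (t : ℝ) (n : ℕ) : 0 < boltzmannSum c t n :=
  Finset.prod_pos fun j _ => by positivity

lemma boltzmannSum_mul {c n : ℕ} (hcn : c ≤ n) (t : ℝ) :
    boltzmannSum 0 t c * boltzmannSum c t n = boltzmannSum 0 t n :=
  Finset.prod_Ioc_consecutive _ c.zero_le hcn

lemma one_add_exp_neg_mul_bernoulliCharFun (x ω : ℝ) :
    (1 + rexp (-x) : ℝ) * bernoulliCharFun (sigmoid (-x)) ω
      = 1 + Complex.exp (-x + ω * Complex.I) := by
  have hsig : (1 + rexp (-x)) * sigmoid (-x) = rexp (-x) := by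
    rw [sigmoid_def, neg_neg, exp_neg]
    field_simp
    ring
  calc _ = ((1 + rexp (-x) : ℝ) : ℂ) - ((1 + rexp (-x)) * sigmoid (-x) : ℝ)
        + ((1 + rexp (-x)) * sigmoid (-x) : ℝ) * Complex.exp (ω * Complex.I) := by
        rw [bernoulliCharFun]
        push_cast
        ring
    _ = 1 + Complex.exp (-x + ω * Complex.I) := by
        rw [hsig, Complex.exp_add]
        push_cast
        ring

lemma boltzmannSum_mul_tiltedCharFun (c : ℕ) (t : ℝ) (n : ℕ) (φ u : ℝ) :
    boltzmannSum c t n * tiltedCharFun c t n φ u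
      = ∑ p ∈ (Finset.Ioc c n).powerset ×ˢ (Finset.Ioc c n).powerset,
        Complex.exp ((φ * pairRank p : ℝ) * Complex.I)
          * Complex.exp ((∑ j ∈ p.1, j + ∑ j ∈ p.2, j : ℕ) * (-t + u * Complex.I)) := by
  have hfactor (j : ℕ) : (((1 + rexp (-(t * j))) ^ 2 : ℝ) : ℂ)
      * (bernoulliCharFun (sigmoid (-(t * j))) (φ + j * u)
        * bernoulliCharFun (sigmoid (-(t * j))) (-φ + j * u))
      = (1 + Complex.exp (-φ * Complex.I + j * (-t + u * Complex.I)))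
        * (1 + Complex.exp (φ * Complex.I + j * (-t + u * Complex.I))) := by
    rw [sq, Complex.ofReal_mul, mul_mul_mul_comm, one_add_exp_neg_mul_bernoulliCharFun,
      one_add_exp_neg_mul_bernoulliCharFun, mul_comm]
    push_cast
    ring_nf
  rw [boltzmannSum, tiltedCharFun, Complex.ofReal_prod, ← Finset.prod_mul_distrib,
    Finset.prod_congr rfl fun j _ => hfactor j, Finset.prod_mul_distrib, prod_one_add_exp,
    prod_one_add_exp, Finset.sum_mul_sum, ← Finset.sum_product']
  refine Finset.sum_congr rfl fun p _ => ?_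
  rw [← Complex.exp_add, ← Complex.exp_add, pairRank]
  push_cast
  ring_nf

lemma rankSum_eq_integral (c d N : ℕ) (φ t : ℝ) :
    rankSum c d N φ = (rexp (t * (N - d)) * boltzmannSum c t N / (2 * π) : ℝ)
      * ∫ u in (-π)..π, Complex.exp ((u * (d - N) : ℝ) * Complex.I) * tiltedCharFun c t N φ u := by
  have hpairs : boundedPairs c d N
      = {p ∈ (Finset.Ioc c N).powerset ×ˢ (Finset.Ioc c N).powerset |
        ((∑ j ∈ p.1, j + ∑ j ∈ p.2, j : ℕ) + d - N : ℤ) = 0} :=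
    Finset.filter_congr fun p _ => by omega
  have hintegrand (u : ℝ) : ∑ p ∈ (Finset.Ioc c N).powerset ×ˢ (Finset.Ioc c N).powerset,
      Complex.exp ((φ * pairRank p : ℝ) * Complex.I) * Complex.exp
        (((∑ j ∈ p.1, j + ∑ j ∈ p.2, j : ℕ) + d - N : ℤ) * (-t + u * Complex.I))
      = (rexp (t * (N - d)) * boltzmannSum c t N : ℝ)
        * (Complex.exp ((u * (d - N) : ℝ) * Complex.I) * tiltedCharFun c t N φ u) := by
    have hshift (m : ℕ) : Complex.exp ((m + d - N : ℤ) * (-t + u * Complex.I))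
        = rexp (t * (N - d)) * Complex.exp ((u * (d - N) : ℝ) * Complex.I)
          * Complex.exp (m * (-t + u * Complex.I)) := by
      rw [Complex.ofReal_exp, ← Complex.exp_add, ← Complex.exp_add]
      push_cast
      ring_nf
    rw [Complex.ofReal_mul, mul_mul_mul_comm, boltzmannSum_mul_tiltedCharFun, Finset.mul_sum]
    refine Finset.sum_congr rfl fun p _ => ?_
    rw [hshift]
    ring
  rw [rankSum, hpairs, sum_filter_eq_zero_eq_integral _ _ _ t]
  simp_rw [hintegrand]
  rw [intervalIntegral.integral_const_mul]
  push_cast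
  ring

/-! ### Asymptotics of the trigonometric sums -/

lemma rankSum_eq_integral_indicator (c d N : ℕ) (φ t : ℝ) {σ : ℝ} (hσ : 0 < σ) :
    rankSum c d N φ = (rexp (t * (N - d)) * boltzmannSum c t N / (2 * π * σ) : ℝ)
      * ∫ v : ℝ, (Set.Ioc (-(π * σ)) (π * σ)).indicator
        (fun v => Complex.exp ((v / σ * (d - N) : ℝ) * Complex.I) * tiltedCharFun c t N φ (v / σ))
        v := by
  rw [MeasureTheory.integral_indicator measurableSet_Ioc,
    ← intervalIntegral.integral_of_le (neg_le_self (by positivity)),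
    intervalIntegral.integral_comp_div (fun u : ℝ =>
      Complex.exp ((u * (d - N) : ℝ) * Complex.I) * tiltedCharFun c t N φ u) hσ.ne',
    neg_div, mul_div_cancel_right₀ _ hσ.ne', rankSum_eq_integral c d N φ t, Complex.real_smul,
    ← mul_assoc, ← Complex.ofReal_mul]
  congr 2
  field_simp

lemma continuous_tiltedCharFun (c : ℕ) (t : ℝ) (n : ℕ) (φ : ℝ) :
    Continuous (tiltedCharFun c t n φ) := by
  unfold tiltedCharFun bernoulliCharFun
  fun_prop

lemma eventually_half_le_cos (θ : ℝ) : ∀ᶠ N in atTop, 1 / 2 ≤ cos (θ * √(tilt N)) := by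
  have hlim : Tendsto (fun N => cos (θ * √(tilt N))) atTop (nhds 1) := by
    simpa [Function.comp_def] using
      (continuous_cos.tendsto _).comp (tendsto_sqrt_tilt.const_mul θ)
  exact hlim.eventually_const_le (by norm_num)

lemma eventually_mem_Ioc_pi_mul_sizeStd (v : ℝ) :
    ∀ᶠ N in atTop, v ∈ Set.Ioc (-(π * sizeStd N)) (π * sizeStd N) := by
  have hlim : Tendsto (fun N => |v| * (sizeStd N)⁻¹) atTop (nhds 0) := by
    simpa using tendsto_inv_sizeStd.const_mul |v|
  filter_upwards [eventually_sizeStd_pos, hlim.eventually_lt_const pi_pos] with N hσ hv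
  rw [← div_eq_mul_inv, div_lt_iff₀ hσ, abs_lt] at hv
  exact ⟨hv.1, hv.2.le⟩

lemma eventually_norm_tiltedCharFun_le (c : ℕ) (θ : ℝ) :
    ∀ᶠ N in atTop, ∀ v ∈ Set.Ioc (-(π * sizeStd N)) (π * sizeStd N),
      ‖tiltedCharFun c (tilt N) N (θ * √(tilt N)) (v / sizeStd N)‖
        ≤ 10 ^ 11 * rexp (2 * c) * (1 + v ^ 2)⁻¹ := by
  filter_upwards [eventually_ge_atTop c, eventually_tilt, eventually_sizeStd_pos,
    eventually_half_le_cos θ] with N hcN ⟨ht, ht1, htn⟩ hσ hcos v hv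
  have hu : |v / sizeStd N| ≤ π := by
    rw [abs_div, abs_of_pos hσ, div_le_iff₀ hσ]
    exact abs_le.2 ⟨hv.1.le, hv.2⟩
  have hsq : sizeVariance (tilt N) N * (v / sizeStd N) ^ 2 = v ^ 2 := by
    rw [div_pow, sizeStd, sq_sqrt (sizeVariance_pos ht ht1 htn).le,
      mul_div_cancel₀ _ (sizeVariance_pos ht ht1 htn).ne']
  simpa only [hsq] using norm_tiltedCharFun_le hcN ht ht1 htn hcos hu

lemma integral_exp_neg_add_sq_div_two (θ : ℝ) :
    ∫ v : ℝ, (rexp (-((θ ^ 2 + v ^ 2) / 2)) : ℂ) = (rexp (-(θ ^ 2 / 2)) * √(2 * π) : ℝ) := by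
  have hsplit (v : ℝ) : rexp (-((θ ^ 2 + v ^ 2) / 2))
      = rexp (-(θ ^ 2 / 2)) * rexp (-(1 / 2) * v ^ 2) := by
    rw [← Real.exp_add]
    ring_nf
  rw [integral_complex_ofReal]
  simp_rw [hsplit]
  rw [MeasureTheory.integral_const_mul, integral_gaussian]
  congr 3
  ring

lemma tendsto_integral_tiltedCharFun (c d : ℕ) (θ : ℝ) :
    Tendsto (fun N : ℕ => ∫ v : ℝ, (Set.Ioc (-(π * sizeStd N)) (π * sizeStd N)).indicator
      (fun v => Complex.exp ((v / sizeStd N * (d - N) : ℝ) * Complex.I)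
        * tiltedCharFun c (tilt N) N (θ * √(tilt N)) (v / sizeStd N)) v) atTop
      (nhds (rexp (-(θ ^ 2 / 2)) * √(2 * π) : ℝ)) := by
  rw [← integral_exp_neg_add_sq_div_two]
  refine MeasureTheory.tendsto_integral_filter_of_dominated_convergence
    (fun v => 10 ^ 11 * rexp (2 * c) * (1 + v ^ 2)⁻¹) ?_ ?_
    (integrable_inv_one_add_sq.const_mul _) ?_
  · refine Eventually.of_forall fun N => AEMeasurable.aestronglyMeasurable ?_
    have hcont : Continuous fun v : ℝ =>
        tiltedCharFun c (tilt N) N (θ * √(tilt N)) (v / sizeStd N) :=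
      (continuous_tiltedCharFun _ _ _ _).comp (by fun_prop)
    exact (Continuous.measurable (by fun_prop)).indicator measurableSet_Ioc |>.aemeasurable
  · filter_upwards [eventually_norm_tiltedCharFun_le c θ] with N hN
    refine Eventually.of_forall fun v => ?_
    by_cases hv : v ∈ Set.Ioc (-(π * sizeStd N)) (π * sizeStd N)
    · rw [Set.indicator_of_mem hv, norm_mul, Complex.norm_exp_ofReal_mul_I, one_mul]
      exact hN v hv
    · rw [Set.indicator_of_notMem hv, norm_zero]
      positivity
  · refine Eventually.of_forall fun v => (tendsto_exp_mul_tiltedCharFun c d θ v).congr' ?_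
    filter_upwards [eventually_mem_Ioc_pi_mul_sizeStd v] with N hv
    rw [Set.indicator_of_mem hv]

/-- The saddle point approximation of the number of pairs of sets of positive integers of total
size `N`. -/
noncomputable def saddleScale (N : ℕ) : ℝ :=
  rexp (tilt N * N) * boltzmannSum 0 (tilt N) N / (√(2 * π) * sizeStd N)

lemma eventually_saddleScale_pos : ∀ᶠ N in atTop, 0 < saddleScale N := by
  filter_upwards [eventually_sizeStd_pos] with N hσ
  have := boltzmannSum_pos 0 (tilt N) N
  rw [saddleScale]
  positivity

lemma tendsto_exp_div_boltzmannSum (c d : ℕ) :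
    Tendsto (fun N => rexp (-(tilt N * d)) / boltzmannSum 0 (tilt N) c) atTop
      (nhds ((1 / 4) ^ c)) := by
  have hcont : Continuous fun t : ℝ => rexp (-(t * d)) / boltzmannSum 0 t c := by
    have hpos (t : ℝ) := (boltzmannSum_pos 0 t c).ne'
    unfold boltzmannSum at *
    fun_prop (disch := exact hpos _)
  have hzero : rexp (-(0 * d)) / boltzmannSum 0 0 c = (1 / 4) ^ c := by
    norm_num [boltzmannSum, div_pow]
  rw [← hzero]
  exact (hcont.tendsto 0).comp (tendsto_nhds_of_tendsto_nhdsWithin tendsto_tilt)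

lemma tendsto_rankSum_div_saddleScale (c d : ℕ) (θ : ℝ) :
    Tendsto (fun N : ℕ => rankSum c d N (θ * √(tilt N)) / saddleScale N) atTop
      (nhds ((1 / 4) ^ c * rexp (-(θ ^ 2 / 2)) : ℝ)) := by
  have hfactor := ((tendsto_exp_div_boltzmannSum c d).div_const √(2 * π)).ofReal
  have hlim := hfactor.mul (tendsto_integral_tiltedCharFun c d θ)
  have hvalue : (1 / 4 : ℝ) ^ c / √(2 * π) * (rexp (-(θ ^ 2 / 2)) * √(2 * π))
      = (1 / 4) ^ c * rexp (-(θ ^ 2 / 2)) := by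
    field_simp
  rw [← Complex.ofReal_mul, hvalue] at hlim
  refine hlim.congr' ?_
  filter_upwards [eventually_sizeStd_pos, eventually_ge_atTop c] with N hσ hcN
  rw [rankSum_eq_integral_indicator c d N _ (tilt N) hσ, mul_div_right_comm, ← Complex.ofReal_div]
  congr 2
  have hexp : rexp (tilt N * (N - d)) = rexp (tilt N * N) * rexp (-(tilt N * d)) := by
    rw [← Real.exp_add]
    ring_nf
  have hpi : 2 * π = √(2 * π) * √(2 * π) := (mul_self_sqrt (by positivity)).symm
  have hpos₀ := boltzmannSum_pos 0 (tilt N) c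
  have hpos := boltzmannSum_pos c (tilt N) N
  rw [saddleScale, ← boltzmannSum_mul hcN, hexp]
  nth_rewrite 2 [hpi]
  field_simp

/-! ### Strongly concave compositions as pairs of sets -/

lemma pairwise_take_iff {α : Type*} {r : α → α → Prop} (l : List α) (k : ℕ) :
    (l.take k).Pairwise r
      ↔ ∀ i j : Fin l.length, (i : ℕ) < j → (j : ℕ) < k → r (l.get i) (l.get j) := by
  simp only [List.pairwise_iff_getElem, List.length_take, List.getElem_take, List.get_eq_getElem]
  exact ⟨fun h i j hij hjk => h i j (by omega) (by omega) hij,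
    fun h i j hi hj hij => h ⟨i, by omega⟩ ⟨j, by omega⟩ hij (by simp only; omega)⟩

lemma pairwise_drop_iff {α : Type*} {r : α → α → Prop} (l : List α) (k : ℕ) :
    (l.drop k).Pairwise r
      ↔ ∀ i j : Fin l.length, k ≤ (i : ℕ) → (i : ℕ) < j → r (l.get i) (l.get j) := by
  simp only [List.pairwise_iff_getElem, List.length_drop, List.getElem_drop, List.get_eq_getElem]
  refine ⟨fun h i j hki hij => ?_, fun h i j hi hj hij =>
    h ⟨k + i, by omega⟩ ⟨k + j, by omega⟩ (by simp) (by simpa using hij)⟩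
  simpa only [Nat.add_sub_cancel' hki, Nat.add_sub_cancel' (hki.trans hij.le)] using
    h (i - k) (j - k) (by omega) (by omega) (by omega)

lemma isSCC_append_cons {n c : ℕ} {l₁ l₂ : List ℕ} :
    IsSCC n (l₁ ++ c :: l₂) (l₁.length + 1) ↔ l₁.sum + (c + l₂.sum) = n
      ∧ (l₁.SortedGT ∧ ∀ a ∈ l₁, c < a) ∧ (∀ a ∈ l₂, c < a) ∧ l₂.SortedLT := by
  have htake : (l₁ ++ c :: l₂).take (l₁.length + 1) = l₁ ++ [c] := by simp [List.take_append]
  have hdrop : (l₁ ++ c :: l₂).drop (l₁.length + 1 - 1) = c :: l₂ := by simp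
  rw [IsSCC, ← pairwise_take_iff (r := (· > ·)), ← pairwise_drop_iff, htake, hdrop,
    List.pairwise_append, List.pairwise_cons, List.sortedGT_iff_pairwise,
    List.sortedLT_iff_pairwise]
  simp

/-- The strongly concave composition, with the position of its central part, whose central part is
`q.1` and whose sets of parts to the left and to the right of it are `q.2.1` and `q.2.2`. -/
def sccOfSets (q : Σ _ : ℕ, Finset ℕ × Finset ℕ) : List ℕ × ℕ :=
  (q.2.1.sort (· ≥ ·) ++ q.1 :: q.2.2.sort, q.2.1.card + 1)

/-- The central part and the sets of parts to the left and to the right of it, for all strongly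
concave compositions of `N`. -/
def sccData (N : ℕ) : Finset (Σ _ : ℕ, Finset ℕ × Finset ℕ) :=
  (Finset.range (N + 1)).sigma fun c => boundedPairs c c N

lemma mem_sccData {N : ℕ} {q : Σ _ : ℕ, Finset ℕ × Finset ℕ} :
    q ∈ sccData N ↔ (∀ j ∈ q.2.1, q.1 < j) ∧ (∀ j ∈ q.2.2, q.1 < j)
      ∧ ∑ j ∈ q.2.1, j + ∑ j ∈ q.2.2, j + q.1 = N := by
  have hle (A : Finset ℕ) : ∀ j ∈ A, j ≤ ∑ j ∈ A, j := fun j hj =>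
    Finset.single_le_sum (f := id) (fun _ _ => Nat.zero_le _) hj
  simp only [sccData, boundedPairs, Finset.mem_sigma, Finset.mem_range, Finset.mem_filter,
    Finset.mem_product, Finset.mem_powerset, Finset.subset_iff, Finset.mem_Ioc]
  constructor
  · rintro ⟨-, ⟨hA, hB⟩, hsum⟩
    exact ⟨fun j hj => (hA hj).1, fun j hj => (hB hj).1, hsum⟩
  · rintro ⟨hA, hB, hsum⟩
    refine ⟨by omega, ⟨fun j hj => ⟨hA j hj, ?_⟩, fun j hj => ⟨hB j hj, ?_⟩⟩, hsum⟩
    · have := hle _ j hj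
      omega
    · have := hle _ j hj
      omega

lemma sum_sort (A : Finset ℕ) (r : ℕ → ℕ → Prop) [DecidableRel r] [IsTrans ℕ r]
    [Std.Antisymm r] [Std.Total r] : (A.sort r).sum = ∑ j ∈ A, j := by
  rw [← Multiset.sum_coe, Finset.sort_eq, Finset.sum_eq_multiset_sum, Multiset.map_id']

lemma isSCC_sccOfSets_iff {N : ℕ} {q : Σ _ : ℕ, Finset ℕ × Finset ℕ} :
    IsSCC N (sccOfSets q).1 (sccOfSets q).2 ↔ q ∈ sccData N := by
  rw [sccOfSets, ← Finset.length_sort (· ≥ ·), isSCC_append_cons, mem_sccData, sum_sort, sum_sort]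
  simp only [Finset.sortedGT_sort, Finset.sortedLT_sort, Finset.mem_sort, true_and, and_true]
  grind

lemma sccOfSets_injective : Function.Injective sccOfSets := by
  rintro ⟨c, A, B⟩ ⟨c', A', B'⟩ h
  obtain ⟨hlist, hcard⟩ := Prod.mk.inj h
  obtain ⟨hA, hcB⟩ := List.append_inj hlist (by simpa using hcard)
  obtain ⟨rfl, hB⟩ := List.cons.inj hcB
  have hA' := congrArg List.toFinset hA
  have hB' := congrArg List.toFinset hB
  simp only [Finset.sort_toFinset] at hA' hB'
  rw [hA', hB']

lemma exists_sccOfSets_eq {n k : ℕ} {l : List ℕ} (h : IsSCC n l k) :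
    ∃ q, sccOfSets q = (l, k) := by
  obtain ⟨l₁, c, l₂, rfl, rfl⟩ : ∃ l₁ c l₂, l = l₁ ++ c :: l₂ ∧ k = l₁.length + 1 := by
    obtain ⟨hk, hkl, -⟩ := h
    refine ⟨l.take (k - 1), l[k - 1], l.drop (k - 1 + 1), by simp, ?_⟩
    rw [List.length_take]
    omega
  obtain ⟨-, ⟨hl₁, -⟩, -, hl₂⟩ := isSCC_append_cons.1 h
  refine ⟨⟨c, l₁.toFinset, l₂.toFinset⟩, ?_⟩
  have hsort₁ : l₁.toFinset.sort (· ≥ ·) = l₁ :=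
    (List.toFinset_sort _ hl₁.nodup).2 hl₁.sortedGE.pairwise
  have hsort₂ : l₂.toFinset.sort = l₂ := (List.toFinset_sort _ hl₂.nodup).2 hl₂.sortedLE.pairwise
  simp only [sccOfSets, hsort₁, hsort₂, List.toFinset_card_of_nodup hl₁.nodup]

lemma sccRank_sccOfSets (q : Σ _ : ℕ, Finset ℕ × Finset ℕ) :
    sccRank (sccOfSets q).1 (sccOfSets q).2 = pairRank q.2 := by
  simp only [sccRank, sccOfSets, pairRank, List.length_append, List.length_cons,
    Finset.length_sort]
  push_cast
  ring

lemma ncard_isSCC_and_sccRank (N : ℕ) (P : ℤ → Prop) [DecidablePred P] :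
    {p : List ℕ × ℕ | IsSCC N p.1 p.2 ∧ P (sccRank p.1 p.2)}.ncard
      = {q ∈ sccData N | P (pairRank q.2)}.card := by
  have himage : {p : List ℕ × ℕ | IsSCC N p.1 p.2 ∧ P (sccRank p.1 p.2)}
      = sccOfSets '' ({q ∈ sccData N | P (pairRank q.2)} : Finset _) := by
    ext p
    simp only [Set.mem_ofPred_eq, Set.mem_image, Finset.coe_filter, ← isSCC_sccOfSets_iff,
      ← sccRank_sccOfSets]
    refine ⟨fun h => ?_, fun ⟨_, hq, hqp⟩ => hqp ▸ hq⟩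
    obtain ⟨q, hq⟩ := exists_sccOfSets_eq h.1
    exact ⟨q, by rwa [hq], hq⟩
  rw [himage, Set.ncard_image_of_injective _ sccOfSets_injective, Set.ncard_coe_finset]

lemma VdTotal_eq_card_sccData (N : ℕ) : VdTotal N = (sccData N).card := by
  simpa [VdTotal] using ncard_isSCC_and_sccRank N fun _ => True

lemma sccData_nonempty (N : ℕ) : (sccData N).Nonempty :=
  ⟨⟨N, ∅, ∅⟩, mem_sccData.2 (by simp)⟩

/-! ### Summation over the central part -/

lemma insert_inj_of_forall_lt {α : Type*} [LinearOrder α] {a b : α} {s t : Finset α}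
    (hs : ∀ x ∈ s, a < x) (ht : ∀ x ∈ t, b < x) (h : insert a s = insert b t) :
    a = b ∧ s = t := by
  have hle {a b : α} {s t : Finset α} (hs : ∀ x ∈ s, a < x) (h : insert a s = insert b t) :
      a ≤ b := by
    have hb : b ∈ insert a s := h ▸ Finset.mem_insert_self b t
    rcases Finset.mem_insert.1 hb with rfl | hbs
    exacts [le_rfl, (hs b hbs).le]
  obtain rfl := (hle hs h).antisymm (hle ht h.symm)
  refine ⟨rfl, ?_⟩
  rw [← Finset.erase_insert fun ha => lt_irrefl a (hs a ha), h,
    Finset.erase_insert fun ha => lt_irrefl a (ht a ha)]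

-- A central part `c > K` can be moved into the left set, from which it is recovered as the minimum.
lemma sum_card_boundedPairs_le (K N : ℕ) :
    ∑ c ∈ Finset.Ioc K N, (boundedPairs c c N).card ≤ (boundedPairs K 0 N).card := by
  rw [← Finset.card_sigma]
  refine Finset.card_le_card_of_injOn (fun q => (insert q.1 q.2.1, q.2.2)) ?_ ?_
  all_goals simp only [Set.InjOn, Set.MapsTo, Finset.coe_sigma, Set.mem_sigma_iff, Finset.mem_coe,
    boundedPairs, Finset.mem_filter, Finset.mem_product, Finset.mem_powerset, Prod.mk.injEq,
    Finset.subset_iff, Finset.mem_Ioc]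
  · rintro ⟨c, A, B⟩ ⟨⟨hKc, hcN⟩, ⟨hA, hB⟩, hsum⟩
    have hc : c ∉ A := fun hc => lt_irrefl c (hA hc).1
    refine ⟨⟨fun j hj => ?_, fun j hj => ⟨hKc.trans (hB hj).1, (hB hj).2⟩⟩, ?_⟩
    · rcases Finset.mem_insert.1 hj with rfl | hj
      exacts [⟨hKc, hcN⟩, ⟨hKc.trans (hA hj).1, (hA hj).2⟩]
    · simp only [Finset.sum_insert hc] at hsum ⊢
      omega
  · rintro ⟨c, A, B⟩ ⟨-, ⟨hA, -⟩, -⟩ ⟨c', A', B'⟩ ⟨-, ⟨hA', -⟩, -⟩ ⟨hins, rfl⟩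
    obtain ⟨rfl, rfl⟩ :=
      insert_inj_of_forall_lt (fun j hj => (hA hj).1) (fun j hj => (hA' hj).1) hins
    rfl

/-- The trigonometric sum of the ranks of the strongly concave compositions of `N`. -/
noncomputable def sccRankSum (N : ℕ) (φ : ℝ) : ℂ :=
  ∑ q ∈ sccData N, Complex.exp ((φ * pairRank q.2 : ℝ) * Complex.I)

lemma rankSum_zero (c d N : ℕ) : rankSum c d N 0 = (boundedPairs c d N).card := by
  simp [rankSum]

lemma sccRankSum_zero (N : ℕ) : sccRankSum N 0 = (sccData N).card := by
  simp [sccRankSum]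

lemma norm_rankSum_le (c d N : ℕ) (φ : ℝ) : ‖rankSum c d N φ‖ ≤ (boundedPairs c d N).card := by
  refine (norm_sum_le _ _).trans ?_
  simp_rw [Complex.norm_exp_ofReal_mul_I]
  simp

lemma norm_sccRankSum_sub_le {K N : ℕ} (hKN : K ≤ N) (φ : ℝ) :
    ‖sccRankSum N φ - ∑ c ∈ Finset.range (K + 1), rankSum c c N φ‖
      ≤ (boundedPairs K 0 N).card := by
  have hsplit : sccRankSum N φ = ∑ c ∈ Finset.range (K + 1), rankSum c c N φ
      + ∑ c ∈ Finset.Ioc K N, rankSum c c N φ := by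
    rw [sccRankSum, sccData, Finset.sum_sigma,
      ← Finset.sum_range_add_sum_Ico _ (Nat.succ_le_succ hKN), ← Finset.Ico_succ_succ_eq_Ioc]
    rfl
  rw [hsplit, add_sub_cancel_left]
  refine (norm_sum_le _ _).trans ((Finset.sum_le_sum fun c _ => norm_rankSum_le c c N φ).trans ?_)
  exact_mod_cast sum_card_boundedPairs_le K N

lemma tendsto_of_forall_eventually_dist_le {α κ X : Type*} [PseudoMetricSpace X] {l : Filter α}
    {p : Filter κ} [p.NeBot] {f : α → X} {F : κ → α → X} {e : κ → α → ℝ} {L : κ → X} {E : κ → ℝ}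
    {x : X} (hdist : ∀ k, ∀ᶠ a in l, dist (f a) (F k a) ≤ e k a)
    (hF : ∀ k, Tendsto (F k) l (nhds (L k))) (hL : Tendsto L p (nhds x))
    (he : ∀ k, Tendsto (e k) l (nhds (E k))) (hE : Tendsto E p (nhds 0)) :
    Tendsto f l (nhds x) := by
  rw [Metric.tendsto_nhds]
  intro ε hε
  obtain ⟨k, hLk, hEk⟩ := ((Metric.tendsto_nhds.1 hL (ε / 3) (by positivity)).and
    (hE.eventually_lt_const (show 0 < ε / 3 by positivity))).exists
  filter_upwards [hdist k, Metric.tendsto_nhds.1 (hF k) (ε / 3) (by positivity),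
    (he k).eventually_lt_const hEk] with a hfF hFL hea
  linarith [dist_triangle4 (f a) (F k a) (L k) x]

lemma tendsto_card_boundedPairs_div_saddleScale (K : ℕ) :
    Tendsto (fun N => (boundedPairs K 0 N).card / saddleScale N) atTop (nhds ((1 / 4) ^ K)) := by
  have hlim := tendsto_rankSum_div_saddleScale K 0 0
  have hvalue : (1 / 4 : ℝ) ^ K * rexp (-(0 ^ 2 / 2)) = (1 / 4) ^ K := by simp
  simp only [zero_mul, rankSum_zero, hvalue, ← Complex.ofReal_natCast, ← Complex.ofReal_div] at hlim
  exact tendsto_ofReal_iff.1 hlim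

lemma tendsto_sccRankSum_div_saddleScale (θ : ℝ) :
    Tendsto (fun N => sccRankSum N (θ * √(tilt N)) / saddleScale N) atTop
      (nhds (4 / 3 * rexp (-(θ ^ 2 / 2)) : ℝ)) := by
  have hgeom : Tendsto (fun K : ℕ => ∑ c ∈ Finset.range (K + 1),
      ((1 / 4) ^ c * rexp (-(θ ^ 2 / 2)) : ℝ)) atTop (nhds (4 / 3 * rexp (-(θ ^ 2 / 2)))) := by
    have hsum := (hasSum_geometric_of_lt_one (r := (1 / 4 : ℝ)) (by norm_num)
      (by norm_num)).mul_right (rexp (-(θ ^ 2 / 2)))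
    rw [show (1 - 1 / 4 : ℝ)⁻¹ = 4 / 3 by norm_num] at hsum
    exact hsum.tendsto_sum_nat.comp (tendsto_add_atTop_nat 1)
  refine tendsto_of_forall_eventually_dist_le
    (F := fun K N => ∑ c ∈ Finset.range (K + 1), rankSum c c N (θ * √(tilt N)) / saddleScale N)
    (fun K => ?_) (fun K => tendsto_finsetSum _ fun c _ => tendsto_rankSum_div_saddleScale c c θ)
    (by simpa only [Function.comp_def, Complex.ofReal_sum] using hgeom.ofReal)
    tendsto_card_boundedPairs_div_saddleScale
    (tendsto_pow_atTop_nhds_zero_of_lt_one (by norm_num) (by norm_num))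
  filter_upwards [eventually_saddleScale_pos, eventually_ge_atTop K] with N hpos hKN
  rw [dist_eq_norm, ← Finset.sum_div, ← sub_div, norm_div, Complex.norm_of_nonneg hpos.le]
  gcongr
  exact norm_sccRankSum_sub_le hKN _

lemma tendsto_sccRankSum_div_card (θ : ℝ) :
    Tendsto (fun N => sccRankSum N (θ * √(tilt N)) / (sccData N).card) atTop
      (nhds (rexp (-(θ ^ 2 / 2)) : ℝ)) := by
  have hlim := (tendsto_sccRankSum_div_saddleScale θ).div (tendsto_sccRankSum_div_saddleScale 0)
    (by simp)
  have hvalue : 4 / 3 * rexp (-(θ ^ 2 / 2)) / (4 / 3 * rexp (-(0 ^ 2 / 2)))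
      = rexp (-(θ ^ 2 / 2)) := by
    simp
  rw [← Complex.ofReal_div, hvalue] at hlim
  refine hlim.congr' ?_
  filter_upwards [eventually_saddleScale_pos] with N hpos
  rw [Pi.div_apply, zero_mul, sccRankSum_zero,
    div_div_div_cancel_right₀ (Complex.ofReal_ne_zero.2 hpos.ne')]

/-! ### Lévy continuity -/

section EmpiricalMeasure

open MeasureTheory ProbabilityTheory

variable {ι : Type*} {s : Finset ι}

/-- The distribution of `X i` for `i` uniform in `s`. -/
noncomputable def empiricalMeasure (s : Finset ι) (X : ι → ℝ) : Measure ℝ :=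
  (s.card : ENNReal)⁻¹ • ∑ i ∈ s, Measure.dirac (X i)

lemma empiricalMeasure_real_apply (X : ι → ℝ) {E : Set ℝ} (hE : MeasurableSet E)
    [DecidablePred (· ∈ E)] :
    (empiricalMeasure s X).real E = {i ∈ s | X i ∈ E}.card / s.card := by
  rw [empiricalMeasure, measureReal_ennreal_smul_apply, measureReal_def, Measure.finsetSum_apply]
  simp [Measure.dirac_apply' _ hE, Set.indicator_apply, div_eq_inv_mul]

lemma isProbabilityMeasure_empiricalMeasure (hs : s.Nonempty) (X : ι → ℝ) :
    IsProbabilityMeasure (empiricalMeasure s X) := by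
  have hcard : (s.card : ENNReal) ≠ 0 := by exact_mod_cast hs.card_ne_zero
  constructor
  simp [empiricalMeasure, ENNReal.inv_mul_cancel hcard (ENNReal.natCast_ne_top _)]

lemma charFun_empiricalMeasure (X : ι → ℝ) (θ : ℝ) :
    charFun (empiricalMeasure s X) θ
      = (∑ i ∈ s, Complex.exp ((θ * X i : ℝ) * Complex.I)) / s.card := by
  rw [charFun_apply_real, empiricalMeasure, integral_smul_measure,
    integral_finsetSum_measure fun i _ => integrable_dirac (by simp)]
  simp [integral_dirac, div_eq_inv_mul]

lemma tendsto_card_filter_le_div_card {μ : Measure ℝ} [IsProbabilityMeasure μ]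
    [NullSingletonClass μ] {S : ℕ → Finset ι} (hS : ∀ N, (S N).Nonempty) {X : ℕ → ι → ℝ}
    (hchar : ∀ θ : ℝ, Tendsto (fun N =>
      (∑ i ∈ S N, Complex.exp ((θ * X N i : ℝ) * Complex.I)) / (S N).card) atTop
      (nhds (charFun μ θ))) (x : ℝ) :
    Tendsto (fun N => ({i ∈ S N | X N i ≤ x}.card / (S N).card : ℝ)) atTop
      (nhds (μ.real (Set.Iic x))) := by
  have hweak : Tendsto (β := ProbabilityMeasure ℝ)
      (fun N => ⟨empiricalMeasure (S N) (X N), isProbabilityMeasure_empiricalMeasure (hS N) _⟩)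
      atTop (nhds ⟨μ, inferInstance⟩) := by
    refine ProbabilityMeasure.tendsto_iff_tendsto_charFun.2 fun θ => ?_
    simpa only [ProbabilityMeasure.coe_mk, charFun_empiricalMeasure] using hchar θ
  have hfrontier : μ (frontier (Set.Iic x)) = 0 := by simp
  have hIic := ProbabilityMeasure.tendsto_measure_of_null_frontier_of_tendsto' hweak hfrontier
  refine ((ENNReal.tendsto_toReal (measure_ne_top μ _)).comp hIic).congr fun N => ?_
  exact empiricalMeasure_real_apply (X N) measurableSet_Iic

lemma gaussianReal_real_Iic (x : ℝ) :
    (gaussianReal 0 1).real (Set.Iic x) = (√(2 * π))⁻¹ * ∫ t in Set.Iic x, rexp (-t ^ 2 / 2) := by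
  rw [measureReal_def, gaussianReal_apply_eq_integral 0 one_ne_zero, ENNReal.toReal_ofReal
    (integral_nonneg fun t => gaussianPDFReal_nonneg _ _ _), ← integral_const_mul]
  simp [gaussianPDFReal]

end EmpiricalMeasure

lemma rpow_one_div_four_eq_inv_sqrt_tilt {N : ℕ} (hN : 0 < N) :
    (6 * (N : ℝ) / π ^ 2) ^ ((1 : ℝ) / 4) = (√(tilt N))⁻¹ := by
  have ht := tilt_pos hN
  have hbase : 6 * (N : ℝ) / π ^ 2 = (√(tilt N))⁻¹ ^ 4 := by
    rw [← pi_sq_div_tilt_sq hN, inv_pow, show √(tilt N) ^ 4 = (√(tilt N) ^ 2) ^ 2 by ring,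
      sq_sqrt ht.le]
    field_simp
  rw [hbase, ← rpow_natCast, ← rpow_mul (by positivity)]
  norm_num

theorem stmt_6 (x : ℝ) :
    Tendsto (fun N : ℕ =>
        (Set.ncard {p : List ℕ × ℕ | IsSCC N p.1 p.2 ∧
            (sccRank p.1 p.2 : ℝ) ≤ x * (6 * (N : ℝ) / π ^ 2) ^ ((1 : ℝ) / 4)} : ℝ) /
          (VdTotal N : ℝ))
      atTop
      (nhds ((Real.sqrt (2 * π))⁻¹ * ∫ t in Set.Iic x, Real.exp (-t ^ 2 / 2))) := by
  have hatoms := ProbabilityTheory.nullSingletonClass_gaussianReal (μ := 0) one_ne_zero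
  have hchar (θ : ℝ) : Tendsto (fun N => (∑ q ∈ sccData N,
      Complex.exp ((θ * (√(tilt N) * pairRank q.2) : ℝ) * Complex.I)) / (sccData N).card) atTop
      (nhds (MeasureTheory.charFun (ProbabilityTheory.gaussianReal 0 1) θ)) := by
    simpa [sccRankSum, ProbabilityTheory.charFun_gaussianReal, mul_assoc] using
      tendsto_sccRankSum_div_card θ
  rw [← gaussianReal_real_Iic]
  refine (tendsto_card_filter_le_div_card sccData_nonempty hchar x).congr' ?_
  filter_upwards [eventually_gt_atTop 0] with N hN
  rw [VdTotal_eq_card_sccData, rpow_one_div_four_eq_inv_sqrt_tilt hN,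
    ncard_isSCC_and_sccRank N fun m : ℤ => (m : ℝ) ≤ x * (√(tilt N))⁻¹]
  simp only [← div_eq_mul_inv, le_div_iff₀' (sqrt_pos.2 (tilt_pos hN))]
end

section
/- There exist constants C > 0 and α₀ > 0 such that for every real α with 0 < α ≤ α₀ and every integer ℓ ≥ 0 with α·ℓ ≤ 1, the sum f(α) = α·Σ_{n≥0} (4n + ℓ)·e^{−2αn² − αnℓ} satisfies |f(α) − 1| ≤ C·(√α + α·ℓ); that is, f(α) = 1 + O(√α + |αℓ|) as α → 0⁺ uniformly for 0 ≤ ℓ = o(α^{−1}). -/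
open Real

/-!
With `φ x = 2αx² + αℓx`, the `n`-th term, including the factor `α`, is the value at `n` of
`f = φ' exp(-φ) = -(exp(-φ))'`, so the sum is a Riemann sum of `∫₀^∞ f = 1`. The error is at most
the total variation `∫₀^∞ |f'|`. On `[0, ∞)` we have
`f' = (φ'' - φ'²) exp(-φ) ≤ 4α exp(-2αx²) =: h`, so `|f'| ≤ 2h - f'` and
`∫₀^∞ |f'| ≤ f 0 + 2 ∫₀^∞ h = αℓ + 2 √(2πα)`.
-/

open MeasureTheory Set Filter Polynomial

section RiemannSum

variable {E : Type*} [NormedAddCommGroup E] [NormedSpace ℝ E] {f f' : ℝ → E} {a b : ℝ}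

lemma hasSum_intervalIntegral_add_natCast (hf : IntegrableOn f (Ioi a)) :
    HasSum (fun n : ℕ ↦ ∫ x in (a + n)..(a + n + 1), f x) (∫ x in Ioi a, f x) := by
  have mono : Monotone fun n : ℕ ↦ a + n := fun m n hmn ↦ by simpa using hmn
  have iUnion_eq : ⋃ n : ℕ, Ioc (a + n) (a + (n + 1 : ℕ)) = Ioi a := by
    simpa using iUnion_Ioc_map_succ_eq_Ioi (f := fun n : ℕ ↦ a + n) (fun n ↦ by simp)
      (not_bddAbove_of_tendsto_atTop
        (tendsto_atTop_add_const_left _ a tendsto_natCast_atTop_atTop))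
  have hasSum_iUnion := hasSum_integral_iUnion (μ := volume) (fun n : ℕ ↦ measurableSet_Ioc)
    mono.pairwise_disjoint_on_Ioc_succ (iUnion_eq.symm ▸ hf)
  simp only [Order.succ_eq_add_one, iUnion_eq] at hasSum_iUnion
  simpa [add_assoc, intervalIntegral.integral_of_le] using hasSum_iUnion

variable [CompleteSpace E]

lemma norm_smul_sub_intervalIntegral_le (hab : a ≤ b)
    (hderiv : ∀ x ∈ Icc a b, HasDerivAt f (f' x) x) (hf' : IntervalIntegrable f' volume a b) :
    ‖(b - a) • f a - ∫ x in a..b, f x‖ ≤ (b - a) * ∫ x in a..b, ‖f' x‖ := by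
  have f_intervalIntegrable : IntervalIntegrable f volume a b :=
    ContinuousOn.intervalIntegrable_of_Icc hab fun x hx ↦
      (hderiv x hx).continuousAt.continuousWithinAt
  have norm_sub_le : ∀ x ∈ uIoc a b, ‖f a - f x‖ ≤ ∫ t in a..b, ‖f' t‖ := by
    intro x hx
    rw [uIoc_of_le hab] at hx
    have hsub : IntervalIntegrable f' volume a x :=
      hf'.mono_set (by
        simpa only [uIcc_of_le hab, uIcc_of_le hx.1.le] using Icc_subset_Icc_right hx.2)
    have ftc : ∫ t in a..x, f' t = f x - f a :=
      intervalIntegral.integral_eq_sub_of_hasDerivAt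
        (fun t ht ↦ hderiv t (Icc_subset_Icc_right hx.2 (by rwa [uIcc_of_le hx.1.le] at ht))) hsub
    calc ‖f a - f x‖ = ‖∫ t in a..x, f' t‖ := by rw [ftc, norm_sub_rev]
      _ ≤ ∫ t in a..x, ‖f' t‖ := intervalIntegral.norm_integral_le_integral_norm hx.1.le
      _ ≤ ∫ t in a..b, ‖f' t‖ :=
        intervalIntegral.integral_mono_interval le_rfl hx.1.le hx.2
          (Eventually.of_forall fun t ↦ norm_nonneg (f' t)) hf'.norm
  calc ‖(b - a) • f a - ∫ x in a..b, f x‖ = ‖∫ x in a..b, (f a - f x)‖ := by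
        rw [intervalIntegral.integral_sub intervalIntegrable_const f_intervalIntegrable,
          intervalIntegral.integral_const]
    _ ≤ (∫ t in a..b, ‖f' t‖) * |b - a| :=
        intervalIntegral.norm_integral_le_of_norm_le_const norm_sub_le
    _ = (b - a) * ∫ x in a..b, ‖f' x‖ := by rw [abs_of_nonneg (sub_nonneg.2 hab), mul_comm]

lemma norm_sub_intervalIntegral_add_natCast_le (hderiv : ∀ x ∈ Ici a, HasDerivAt f (f' x) x)
    (hf' : IntegrableOn f' (Ioi a)) (n : ℕ) :
    ‖f (a + n) - ∫ x in (a + n)..(a + n + 1), f x‖ ≤ ∫ x in (a + n)..(a + n + 1), ‖f' x‖ := by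
  have ha : a ≤ a + n := le_add_of_nonneg_right n.cast_nonneg
  have hle : a + n ≤ a + n + 1 := le_add_of_nonneg_right zero_le_one
  have deriv_integrable : IntervalIntegrable f' volume (a + n) (a + n + 1) :=
    (intervalIntegrable_iff_integrableOn_Ioc_of_le hle).2
      (hf'.mono_set (Ioc_subset_Ioi_self.trans (Ioi_subset_Ioi ha)))
  simpa using norm_smul_sub_intervalIntegral_le hle (fun x hx ↦ hderiv x (ha.trans hx.1))
    deriv_integrable

lemma norm_tsum_sub_integral_Ioi_le (hderiv : ∀ x ∈ Ici a, HasDerivAt f (f' x) x)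
    (hf : IntegrableOn f (Ioi a)) (hf' : IntegrableOn f' (Ioi a)) :
    ‖∑' n : ℕ, f (a + n) - ∫ x in Ioi a, f x‖ ≤ ∫ x in Ioi a, ‖f' x‖ := by
  have error_le := norm_sub_intervalIntegral_add_natCast_le hderiv hf'
  have hasSum_bound := hasSum_intervalIntegral_add_natCast hf'.norm
  have hasSum_integral := hasSum_intervalIntegral_add_natCast hf
  have summable_error := Summable.of_norm_bounded hasSum_bound.summable error_le
  have summable_f : Summable fun n : ℕ ↦ f (a + n) := by
    simpa using summable_error.add hasSum_integral.summable
  rw [← hasSum_integral.tsum_eq, ← summable_f.tsum_sub hasSum_integral.summable]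
  exact tsum_of_norm_bounded hasSum_bound error_le

end RiemannSum

lemma integral_Ioi_abs_deriv_le {f f' h : ℝ → ℝ} {a : ℝ}
    (hderiv : ∀ x ∈ Ici a, HasDerivAt f (f' x) x) (hf : IntegrableOn f (Ioi a))
    (hf' : IntegrableOn f' (Ioi a)) (hh : IntegrableOn h (Ioi a))
    (h_nonneg : ∀ x ∈ Ioi a, 0 ≤ h x) (deriv_le : ∀ x ∈ Ioi a, f' x ≤ h x) :
    ∫ x in Ioi a, |f' x| ≤ f a + 2 * ∫ x in Ioi a, h x := by
  have tendsto_f : Tendsto f atTop (nhds 0) :=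
    tendsto_zero_of_hasDerivAt_of_integrableOn_Ioi
      (fun x hx ↦ hderiv x (Ioi_subset_Ici_self hx)) hf' hf
  calc ∫ x in Ioi a, |f' x| ≤ ∫ x in Ioi a, (2 * h x - f' x) := by
        refine setIntegral_mono_on hf'.abs ((hh.const_mul 2).sub hf') measurableSet_Ioi
          fun x hx ↦ abs_le.2 ⟨?_, ?_⟩
        all_goals linarith [h_nonneg x hx, deriv_le x hx]
    _ = f a + 2 * ∫ x in Ioi a, h x := by
        rw [integral_sub (hh.const_mul 2) hf', integral_const_mul,
          integral_Ioi_of_hasDerivAt_of_tendsto' hderiv hf' tendsto_f]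
        ring

section ExpNegQuadratic

variable {a b : ℝ}

lemma integrable_eval_mul_exp_neg_mul_sq (ha : 0 < a) (p : ℝ[X]) :
    Integrable fun x ↦ p.eval x * exp (-a * x ^ 2) := by
  have monomial_integrable (k : ℕ) : Integrable fun x : ℝ ↦ x ^ k * exp (-a * x ^ 2) := by
    simpa only [rpow_natCast] using
      integrable_rpow_mul_exp_neg_mul_sq ha (s := k) (by linarith [k.cast_nonneg (α := ℝ)])
  simp only [eval_eq_sum_range, Finset.sum_mul, mul_assoc]
  exact integrable_finsetSum _ fun k _ ↦ (monomial_integrable k).const_mul _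

lemma integrable_eval_mul_exp_neg_quadratic (ha : 0 < a) (b : ℝ) (p : ℝ[X]) :
    Integrable fun x ↦ p.eval x * exp (-(a * x ^ 2 + b * x)) := by
  set c := b / (2 * a) with hc
  have complete_square (x : ℝ) :
      -(a * x ^ 2 + b * x) = -a * (x + c) ^ 2 + a * c ^ 2 := by
    rw [hc]
    field_simp
    ring
  have shifted := (integrable_eval_mul_exp_neg_mul_sq ha (p.comp (X - C c))).comp_add_right c
  simpa [complete_square, exp_add, mul_assoc] using
    shifted.mul_const (exp (a * c ^ 2))

lemma hasDerivAt_exp_neg_quadratic (a b x : ℝ) :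
    HasDerivAt (fun x ↦ exp (-(a * x ^ 2 + b * x)))
      (-((2 * a * x + b) * exp (-(a * x ^ 2 + b * x)))) x := by
  have quadratic : HasDerivAt (fun x ↦ a * x ^ 2 + b * x) (2 * a * x + b) x :=
    (((hasDerivAt_pow 2 x).const_mul a).fun_add (hasDerivAt_const_mul b)).congr_deriv
      (by push_cast; ring)
  exact quadratic.fun_neg.exp.congr_deriv (by ring)

lemma hasDerivAt_linear_mul_exp_neg_quadratic (a b x : ℝ) :
    HasDerivAt (fun x ↦ (2 * a * x + b) * exp (-(a * x ^ 2 + b * x)))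
      ((2 * a - (2 * a * x + b) ^ 2) * exp (-(a * x ^ 2 + b * x))) x :=
  (((hasDerivAt_const_mul (2 * a)).add_const b).fun_mul
    (hasDerivAt_exp_neg_quadratic a b x)).congr_deriv (by ring)

lemma integrable_exp_neg_quadratic (ha : 0 < a) (b : ℝ) :
    Integrable fun x ↦ exp (-(a * x ^ 2 + b * x)) := by
  simpa using integrable_eval_mul_exp_neg_quadratic ha b 1

lemma integrable_linear_mul_exp_neg_quadratic (ha : 0 < a) (b : ℝ) :
    Integrable fun x ↦ (2 * a * x + b) * exp (-(a * x ^ 2 + b * x)) := by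
  have eval_integrable := integrable_eval_mul_exp_neg_quadratic ha b (C (2 * a) * X + C b)
  simpa only [eval_add, eval_mul, eval_C, eval_X] using eval_integrable

lemma integrable_deriv_linear_mul_exp_neg_quadratic (ha : 0 < a) (b : ℝ) :
    Integrable fun x ↦ (2 * a - (2 * a * x + b) ^ 2) * exp (-(a * x ^ 2 + b * x)) := by
  have eval_integrable :=
    integrable_eval_mul_exp_neg_quadratic ha b (C (2 * a) - (C (2 * a) * X + C b) ^ 2)
  simpa only [eval_sub, eval_pow, eval_add, eval_mul, eval_C, eval_X] using eval_integrable

lemma integral_Ioi_linear_mul_exp_neg_quadratic (ha : 0 < a) (b : ℝ) :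
    ∫ x in Ioi 0, (2 * a * x + b) * exp (-(a * x ^ 2 + b * x)) = 1 := by
  have deriv_integrable :=
    (integrable_linear_mul_exp_neg_quadratic ha b).neg.integrableOn (s := Ioi 0)
  have tendsto_exp := tendsto_zero_of_hasDerivAt_of_integrableOn_Ioi
    (fun x _ ↦ hasDerivAt_exp_neg_quadratic a b x) deriv_integrable
    (integrable_exp_neg_quadratic ha b).integrableOn
  have ftc := integral_Ioi_of_hasDerivAt_of_tendsto'
    (fun x _ ↦ hasDerivAt_exp_neg_quadratic a b x) deriv_integrable tendsto_exp
  simpa [integral_neg] using ftc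

lemma integral_Ioi_abs_deriv_linear_mul_exp_neg_quadratic_le (ha : 0 < a) (hb : 0 ≤ b) :
    ∫ x in Ioi 0, |(2 * a - (2 * a * x + b) ^ 2) * exp (-(a * x ^ 2 + b * x))| ≤
      b + 2 * √(π * a) := by
  have deriv_le : ∀ x ∈ Ioi (0 : ℝ),
      (2 * a - (2 * a * x + b) ^ 2) * exp (-(a * x ^ 2 + b * x)) ≤ 2 * a * exp (-a * x ^ 2) := by
    intro x hx
    have hbx : 0 ≤ b * x := mul_nonneg hb (le_of_lt hx)
    gcongr
    · exact sub_le_self _ (sq_nonneg _)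
    · linarith
  have integral_bound : 2 * ∫ x in Ioi 0, 2 * a * exp (-a * x ^ 2) = 2 * √(π * a) := by
    have sqrt_eq : √(π * a) = a * √(π / a) := by
      rw [show π * a = a ^ 2 * (π / a) by field_simp, sqrt_mul (sq_nonneg a), sqrt_sq ha.le]
    rw [integral_const_mul, integral_gaussian_Ioi, sqrt_eq]
    ring
  have variation_le := integral_Ioi_abs_deriv_le
    (fun x _ ↦ hasDerivAt_linear_mul_exp_neg_quadratic a b x)
    (integrable_linear_mul_exp_neg_quadratic ha b).integrableOn
    (integrable_deriv_linear_mul_exp_neg_quadratic ha b).integrableOn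
    ((integrable_exp_neg_mul_sq ha).const_mul (2 * a)).integrableOn
    (fun x _ ↦ by positivity) deriv_le
  rw [integral_bound] at variation_le
  simpa only [mul_zero, zero_pow two_ne_zero, zero_add, add_zero, neg_zero, exp_zero, mul_one]
    using variation_le

theorem abs_tsum_linear_mul_exp_neg_quadratic_sub_one_le (ha : 0 < a) (hb : 0 ≤ b) :
    |∑' n : ℕ, (2 * a * n + b) * exp (-(a * (n : ℝ) ^ 2 + b * n)) - 1| ≤ b + 2 * √(π * a) := by
  have error_le := norm_tsum_sub_integral_Ioi_le (a := 0)
    (fun x _ ↦ hasDerivAt_linear_mul_exp_neg_quadratic a b x)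
    (integrable_linear_mul_exp_neg_quadratic ha b).integrableOn
    (integrable_deriv_linear_mul_exp_neg_quadratic ha b).integrableOn
  simp only [zero_add, integral_Ioi_linear_mul_exp_neg_quadratic ha b, norm_eq_abs] at error_le
  exact error_le.trans (integral_Ioi_abs_deriv_linear_mul_exp_neg_quadratic_le ha hb)

end ExpNegQuadratic

theorem stmt_8_general {α ℓ : ℝ} (hα : 0 < α) (hℓ : 0 ≤ ℓ) :
    |α * ∑' n : ℕ, (4 * (n : ℝ) + ℓ) * exp (-2 * α * (n : ℝ) ^ 2 - α * (n : ℝ) * ℓ) - 1| ≤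
      6 * (√α + α * ℓ) := by
  have sum_eq : α * ∑' n : ℕ, (4 * (n : ℝ) + ℓ) * exp (-2 * α * (n : ℝ) ^ 2 - α * (n : ℝ) * ℓ) =
      ∑' n : ℕ, (2 * (2 * α) * n + α * ℓ) * exp (-(2 * α * (n : ℝ) ^ 2 + α * ℓ * n)) := by
    rw [← tsum_mul_left]
    congr! 2 with n
    ring_nf
  have sqrt_le : √(π * (2 * α)) ≤ 3 * √α := by
    rw [sqrt_le_iff, mul_pow, sq_sqrt hα.le]
    exact ⟨by positivity, by nlinarith [pi_lt_four]⟩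
  have hαℓ : 0 ≤ α * ℓ := by positivity
  rw [sum_eq]
  linarith [abs_tsum_linear_mul_exp_neg_quadratic_sub_one_le (mul_pos two_pos hα) hαℓ]

theorem stmt_8 :
    ∃ C > (0 : ℝ), ∃ α₀ > (0 : ℝ), ∀ α : ℝ, 0 < α → α ≤ α₀ → ∀ ℓ : ℕ, α * ℓ ≤ 1 →
      |α * ∑' n : ℕ, (4 * (n : ℝ) + ℓ) *
          Real.exp (-2 * α * (n : ℝ) ^ 2 - α * (n : ℝ) * ℓ) - 1| ≤
        C * (Real.sqrt α + α * ℓ) :=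
  ⟨6, by norm_num, 1, one_pos, fun _ hα _ ℓ _ ↦ stmt_8_general hα ℓ.cast_nonneg⟩
end
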